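/- arXiv:1912.00851 — 3 statements merged into one kernel-verified Lean document; each statement's English description precedes it below -/
import Mathlib

section
/- Fix a positive integer d. Then there is a constant C such that for all x ≥ 2 the number of integers n ≤ x whose largest prime divisor p = P⁺(n) satisfies p > √x, with d | n and d | p − 1, differs from (log 2)·x/(d·φ(d)) by at most C·x/log x (here φ is Euler's totient function). -/
/-!
Two distinct primes exceeding `√x` cannot both divide some `n ≤ x`, so a prime `p > √x` dividing such
an `n` is automatically `P⁺(n)`. Since `d ∣ p - 1` forces `d` and `p` to be coprime, the integers
to be counted are the multiples of `p d` up to `x`, for the primes `√x < p ≤ x` with `p ≡ 1 (mod d)`.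
Their number is `∑ ⌊x / (p d)⌋ = (x / d) ∑ 1 / p + O(π(x))` (`ncard_eq_sum_div`), where
`π(x) = O(x / log x)` by Chebyshev, and it remains to show
`∑ 1 / p = log 2 / φ(d) + O(1 / log x)` over these primes.

This is Mertens' second theorem in the progression `1` mod `d`
(`exists_abs_sum_inv_prime_sub_le`), which follows by partial summation from the first,
`∑_{p ≤ N, p ≡ 1 (d)} log p / p = log N / φ(d) + O(1)` (`exists_abs_sum_log_prime_div_sub_le`).
By orthogonality of Dirichlet characters the latter reduces to estimating
`∑_{n ≤ N} χ(n) Λ(n) / n`, up to the bounded contribution of proper prime powers.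
* For the principal character this is `log N + O(1)`, by comparing `log N!` with `∑ Λ(m) ⌊N / m⌋`.
* For `χ ≠ 1` it is `O(1)` (`exists_norm_sum_char_vonMangoldt_div_le`). Expanding `log = Λ * 1` gives
  `∑_{n ≤ N} χ(n) log n / n = ∑_{m ≤ N} χ(m) Λ(m) / m · ∑_{k ≤ N / m} χ(k) / k`. The left side is
  bounded, and the inner sum is `L(1, χ) + O(m / N)`; Chebyshev's bound controls the error, and one
  divides by `L(1, χ) ≠ 0`.
-/

/-- `P⁺(n)`, the largest prime divisor of `n ≥ 2`, with `P⁺(1) = 1` (and `P⁺(0) = 0`). -/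
def Pplus (n : ℕ) : ℕ :=
  if n ≤ 1 then n else n.primeFactors.sup id

open Finset Filter Topology ArithmeticFunction

/-! ### Partial summation -/

/-- **Abel's inequality**: a series with bounded partial sums, weighted by a nonnegative antitone
sequence, has tails bounded by the first weight. -/
lemma norm_sum_Ico_smul_le_of_antitoneOn {E : Type*} [NormedAddCommGroup E] [NormedSpace ℝ E]
    {a : ℕ → E} {f : ℕ → ℝ} {B : ℝ} {M : ℕ} (hB : ∀ n, ‖∑ k ∈ range n, a k‖ ≤ B)
    (hf : AntitoneOn f (Set.Ici M)) (hf0 : ∀ n, M ≤ n → 0 ≤ f n) (N : ℕ) :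
    ‖∑ k ∈ Ico M N, f k • a k‖ ≤ 2 * B * f M := by
  have hB0 : 0 ≤ B := (norm_nonneg _).trans (hB 0)
  rcases lt_or_ge N M with hN | hN
  · rw [Ico_eq_empty_of_le hN.le]
    simpa using mul_nonneg (mul_nonneg zero_le_two hB0) (hf0 M le_rfl)
  -- The boundary term of the summation by parts is carried along on the left-hand side.
  have key : ‖∑ k ∈ Ico M N, f k • a k - f N • ∑ k ∈ range N, a k‖ ≤ B * f M + B * (f M - f N) := by
    induction N, hN using Nat.le_induction with
    | base =>
      simp only [Ico_self, sum_empty, zero_sub, norm_neg, sub_self, mul_zero, add_zero, norm_smul,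
        Real.norm_of_nonneg (hf0 M le_rfl)]
      rw [mul_comm]
      exact mul_le_mul_of_nonneg_right (hB M) (hf0 M le_rfl)
    | succ N hN ih =>
      have hd : 0 ≤ f N - f (N + 1) :=
        sub_nonneg.2 (hf hN (show M ≤ N + 1 by omega) (Nat.le_succ N))
      have e : ∑ k ∈ Ico M (N + 1), f k • a k - f (N + 1) • ∑ k ∈ range (N + 1), a k
          = (∑ k ∈ Ico M N, f k • a k - f N • ∑ k ∈ range N, a k)
            + (f N - f (N + 1)) • ∑ k ∈ range (N + 1), a k := by
        rw [sum_Ico_succ_top hN, sum_range_succ]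
        module
      rw [e]
      refine (norm_add_le _ _).trans ?_
      have : ‖(f N - f (N + 1)) • ∑ k ∈ range (N + 1), a k‖ ≤ (f N - f (N + 1)) * B := by
        rw [norm_smul, Real.norm_of_nonneg hd]
        exact mul_le_mul_of_nonneg_left (hB _) hd
      linarith
  have h2 : ‖f N • ∑ k ∈ range N, a k‖ ≤ f N * B := by
    rw [norm_smul, Real.norm_of_nonneg (hf0 N hN)]
    exact mul_le_mul_of_nonneg_left (hB _) (hf0 N hN)
  have h3 := norm_le_norm_sub_add (∑ k ∈ Ico M N, f k • a k) (f N • ∑ k ∈ range N, a k)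
  linarith

/-! ### Sums over a nonprincipal character -/

section character

variable {q : ℕ} [NeZero q] {χ : DirichletCharacter ℂ q}

/-- The sum over a full period vanishes, so only an incomplete period contributes. -/
lemma norm_sum_range_char_le (hχ : χ ≠ 1) (n : ℕ) : ‖∑ k ∈ range n, χ k‖ ≤ q := by
  have hper : ∑ k ∈ range q, χ (k : ZMod q) = 0 := by
    rw [← MulChar.sum_eq_zero_of_ne_one hχ]
    refine sum_bij' (fun k _ ↦ (k : ZMod q)) (fun a _ ↦ a.val) ?_ ?_ ?_ ?_ ?_
    · simp
    · intro a _; simpa using ZMod.val_lt a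
    · intro k hk; exact ZMod.val_cast_of_lt (mem_range.1 hk)
    · intro a _; simp
    · simp
  induction n using Nat.strong_induction_on with
  | _ n ih =>
    rcases le_total n q with h | h
    · calc ‖∑ k ∈ range n, χ k‖ ≤ ∑ k ∈ range n, ‖χ k‖ := norm_sum_le _ _
        _ ≤ ∑ k ∈ range n, (1 : ℝ) := sum_le_sum fun k _ ↦ χ.norm_le_one _
        _ ≤ q := by simpa using h
    · obtain ⟨m, rfl⟩ := Nat.exists_eq_add_of_le h
      rw [sum_range_add, hper, zero_add]
      simpa using ih m (by have := NeZero.pos q; omega)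

/-- The series `∑ χ(k) / k` converges to `L(1, χ)` with an explicit rate. `LFunction` is defined at `1`
by analytic continuation, so the tail bound is proved for real `s > 1` and carried to the limit
`s → 1`. -/
lemma norm_sum_char_div_sub_LFunction_le (hχ : χ ≠ 1) (N : ℕ) :
    ‖∑ k ∈ Ioc 0 N, χ k / k - χ.LFunction 1‖ ≤ 2 * q * (1 / (N + 1 : ℝ)) := by
  have hs : ∀ s : ℝ, 1 < s →
      ‖∑ k ∈ Ioc 0 N, χ k * (k : ℂ) ^ (-(s : ℂ)) - χ.LFunction s‖ ≤ 2 * q * (1 / (N + 1 : ℝ)) := by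
    intro s hs
    have hsum : LSeriesSummable (fun n ↦ χ n) (s : ℂ) :=
      DirichletCharacter.LSeriesSummable_of_one_lt_re χ (by simpa using hs)
    have hlim := hsum.hasSum.tendsto_sum_nat
    change Tendsto _ _ (𝓝 (LSeries (fun n ↦ χ n) (s : ℂ))) at hlim
    rw [← DirichletCharacter.LFunction_eq_LSeries χ (by simpa using hs)] at hlim
    have hterm : ∀ k : ℕ, 1 ≤ k →
        LSeries.term (fun n ↦ χ n) (s : ℂ) k = χ k * (k : ℂ) ^ (-(s : ℂ)) := by
      intro k hk
      rw [LSeries.term_of_ne_zero (by omega), Complex.cpow_neg, div_eq_mul_inv]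
    have hlim2 := (hlim.const_sub (∑ k ∈ Ioc 0 N, χ k * (k : ℂ) ^ (-(s : ℂ)))).norm
    refine le_of_tendsto hlim2 ?_
    filter_upwards [eventually_ge_atTop (N + 1)] with M hM
    have e : ∑ k ∈ Ioc 0 N, χ k * (k : ℂ) ^ (-(s : ℂ)) -
        ∑ k ∈ range M, LSeries.term (fun n ↦ χ n) (s : ℂ) k
        = - ∑ k ∈ Ico (N + 1) M, ((k : ℝ) ^ (-s)) • χ k := by
      rw [range_eq_Ico, ← sum_Ico_consecutive _ (Nat.zero_le _) (show 1 ≤ M by omega),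
        ← sum_Ico_consecutive _ (show 1 ≤ N + 1 by omega) hM]
      have h0 : ∑ k ∈ Ico 0 1, LSeries.term (fun n ↦ χ n) (s : ℂ) k = 0 := by simp
      have h1 : ∑ k ∈ Ico 1 (N + 1), LSeries.term (fun n ↦ χ n) (s : ℂ) k
          = ∑ k ∈ Ioc 0 N, χ k * (k : ℂ) ^ (-(s : ℂ)) := by
        rw [show Ico 1 (N + 1) = Ioc 0 N by ext; simp; omega]
        exact sum_congr rfl fun k hk ↦ hterm k (by simp at hk; omega)
      have h2 : ∑ k ∈ Ico (N + 1) M, LSeries.term (fun n ↦ χ n) (s : ℂ) k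
          = ∑ k ∈ Ico (N + 1) M, ((k : ℝ) ^ (-s)) • χ k := by
        refine sum_congr rfl fun k hk ↦ ?_
        rw [hterm k (by simp at hk; omega), Complex.real_smul,
          Complex.ofReal_cpow (Nat.cast_nonneg k), mul_comm]
        simp
      rw [h0, h1, h2]; ring
    rw [e, norm_neg]
    refine (norm_sum_Ico_smul_le_of_antitoneOn (norm_sum_range_char_le hχ) ?_ ?_ M).trans ?_
    · intro a ha b hb hab
      have : (0 : ℝ) < a := by
        have : N + 1 ≤ a := ha
        exact_mod_cast (by omega : 0 < a)
      exact Real.rpow_le_rpow_of_nonpos this (by exact_mod_cast hab) (by linarith)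
    · intro n _; positivity
    · refine mul_le_mul_of_nonneg_left ?_ (by positivity)
      rw [one_div, ← Real.rpow_neg_one]
      push_cast
      exact Real.rpow_le_rpow_of_exponent_le (by linarith [Nat.cast_nonneg (α := ℝ) N])
        (by linarith)
  have hcont : Continuous fun s : ℝ ↦
      ‖∑ k ∈ Ioc 0 N, χ k * (k : ℂ) ^ (-(s : ℂ)) - χ.LFunction s‖ := by
    refine Continuous.norm (Continuous.sub (continuous_finsetSum _ fun k hk ↦ ?_) ?_)
    · refine continuous_const.mul (Continuous.const_cpow (by fun_prop) (Or.inl ?_))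
      have : k ≠ 0 := by simp at hk; omega
      exact_mod_cast this
    · exact (DirichletCharacter.differentiable_LFunction hχ).continuous.comp
        Complex.continuous_ofReal
  have hlim := (hcont.tendsto 1).mono_left (nhdsWithin_le_nhds (s := Set.Ioi 1))
  have := le_of_tendsto hlim (eventually_nhdsWithin_of_forall hs)
  simpa [Complex.cpow_neg_one, div_eq_mul_inv] using this

lemma exists_norm_sum_char_log_div_le (hχ : χ ≠ 1) :
    ∃ C : ℝ, ∀ N : ℕ, ‖∑ n ∈ Ioc 0 N, χ n * Real.log n / n‖ ≤ C := by
  refine ⟨∑ n ∈ Ico 1 (3 : ℕ), ‖χ n * Real.log n / n‖ + 2 * q * (Real.log (3 : ℕ) / (3 : ℕ)),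
    fun N ↦ ?_⟩
  have hpos : 0 ≤ 2 * (q : ℝ) * (Real.log (3 : ℕ) / (3 : ℕ)) := by positivity
  rw [show Ioc 0 N = Ico 1 (N + 1) by ext; simp; omega]
  rcases le_total (N + 1) 3 with h | h
  · refine (norm_sum_le _ _).trans ?_
    have := sum_le_sum_of_subset_of_nonneg (Ico_subset_Ico_right (a := 1) h)
      (fun n _ _ ↦ norm_nonneg (χ n * Real.log n / n))
    linarith
  · rw [← sum_Ico_consecutive _ (by norm_num) h]
    refine (norm_add_le _ _).trans (add_le_add (norm_sum_le _ _) ?_)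
    have e : ∑ n ∈ Ico 3 (N + 1), χ n * Real.log n / n
        = ∑ n ∈ Ico 3 (N + 1), (Real.log n / n) • χ n := by
      refine sum_congr rfl fun n _ ↦ ?_
      rw [Complex.real_smul]; push_cast; ring
    rw [e]
    -- `log t / t` is antitone from `e < 3` on.
    refine norm_sum_Ico_smul_le_of_antitoneOn (f := fun n ↦ Real.log n / n)
      (norm_sum_range_char_le hχ) ?_ ?_ (N + 1)
    · have h3 : ∀ n : ℕ, 3 ≤ n → Real.exp 1 ≤ n := fun n hn ↦
        (Real.exp_one_lt_d9.le.trans (by norm_num)).trans (by exact_mod_cast hn : (3 : ℝ) ≤ n)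
      intro a ha b hb hab
      exact Real.log_div_self_antitoneOn (h3 a ha) (h3 b hb) (by exact_mod_cast hab)
    · intro n _
      exact div_nonneg (Real.log_natCast_nonneg n) n.cast_nonneg


/-- The identity `log = Λ * 1`, twisted by the completely multiplicative `χ(n) / n` and summed up to
`N`. -/
lemma sum_char_log_div_eq (χ : DirichletCharacter ℂ q) (N : ℕ) :
    ∑ n ∈ Ioc 0 N, χ n * Real.log n / n =
      ∑ m ∈ Ioc 0 N, χ m * (vonMangoldt m : ℝ) / m * ∑ k ∈ Ioc 0 (N / m), χ k / k := by
  let F : ArithmeticFunction ℂ := ⟨fun n ↦ χ n * (vonMangoldt n : ℝ) / n, by simp⟩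
  let G : ArithmeticFunction ℂ := ⟨fun n ↦ χ n / n, by simp⟩
  rw [show ∑ m ∈ Ioc 0 N, χ m * (vonMangoldt m : ℝ) / m * ∑ k ∈ Ioc 0 (N / m), χ k / k
    = ∑ m ∈ Ioc 0 N, (F * G) m from (sum_Ioc_mul_eq_sum_sum F G N).symm]
  refine sum_congr rfl fun n hn ↦ ?_
  rw [ArithmeticFunction.mul_apply]
  have hn0 : (n : ℂ) ≠ 0 := by
    have : n ≠ 0 := by simp at hn; omega
    exact_mod_cast this
  have : ∀ x ∈ n.divisorsAntidiagonal, F x.1 * G x.2 = χ n / n * (vonMangoldt x.1 : ℝ) := by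
    intro x hx
    have hx' := (Nat.mem_divisorsAntidiagonal.1 hx).1
    change χ x.1 * (vonMangoldt x.1 : ℝ) / x.1 * (χ x.2 / x.2) = _
    rw [← hx']
    push_cast
    rw [map_mul]
    ring
  rw [sum_congr rfl this, ← mul_sum,
    Nat.sum_divisorsAntidiagonal (fun i _ ↦ ((vonMangoldt i : ℝ) : ℂ)), ← Complex.ofReal_sum,
    vonMangoldt_sum]
  ring

lemma sum_vonMangoldt_le (N : ℕ) : ∑ m ∈ Ioc 0 N, vonMangoldt m ≤ (Real.log 4 + 4) * N := by
  simpa [Chebyshev.psi] using Chebyshev.psi_le_const_mul_self (x := (N : ℝ)) (by positivity)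

/-- The logarithmic average of `χ Λ` stays bounded; this is where `L(1, χ) ≠ 0` enters. -/
lemma exists_norm_sum_char_vonMangoldt_div_le (hχ : χ ≠ 1) :
    ∃ C : ℝ, ∀ N : ℕ, ‖∑ n ∈ Ioc 0 N, χ n * (vonMangoldt n : ℝ) / n‖ ≤ C := by
  obtain ⟨C, hC⟩ := exists_norm_sum_char_log_div_le hχ
  have hL : 0 < ‖χ.LFunction 1‖ :=
    norm_pos_iff.2 (DirichletCharacter.LFunction_apply_one_ne_zero hχ)
  refine ⟨(C + 2 * q * (Real.log 4 + 4)) / ‖χ.LFunction 1‖, fun N ↦ ?_⟩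
  rw [le_div_iff₀ hL, ← norm_mul]
  have e : (∑ n ∈ Ioc 0 N, χ n * (vonMangoldt n : ℝ) / n) * χ.LFunction 1 =
      ∑ n ∈ Ioc 0 N, χ n * Real.log n / n - ∑ m ∈ Ioc 0 N, χ m * (vonMangoldt m : ℝ) / m *
        (∑ k ∈ Ioc 0 (N / m), χ k / k - χ.LFunction 1) := by
    rw [sum_char_log_div_eq, sum_mul, ← sum_sub_distrib]
    exact sum_congr rfl fun _ _ ↦ by ring
  rw [e]
  refine (norm_sub_le _ _).trans (add_le_add (hC N) ?_)
  refine (norm_sum_le _ _).trans ?_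
  rcases Nat.eq_zero_or_pos N with rfl | hN
  · simp; positivity
  have hN' : (0 : ℝ) < N := by exact_mod_cast hN
  calc ∑ m ∈ Ioc 0 N, ‖χ m * (vonMangoldt m : ℝ) / m *
        (∑ k ∈ Ioc 0 (N / m), χ k / k - χ.LFunction 1)‖
      ≤ ∑ m ∈ Ioc 0 N, vonMangoldt m * (2 * q / N) := by
        refine sum_le_sum fun m hm ↦ ?_
        have hm0 : (0 : ℝ) < m := by
          have : 0 < m := by simp at hm; omega
          exact_mod_cast this
        have hdiv : (N : ℝ) / m ≤ (N / m : ℕ) + 1 := by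
          rw [← Nat.floor_div_eq_div (K := ℝ)]
          exact (Nat.lt_floor_add_one _).le
        rw [norm_mul]
        have h1 : ‖χ m * (vonMangoldt m : ℝ) / m‖ ≤ vonMangoldt m / m := by
          rw [norm_div, norm_mul, Complex.norm_real, Real.norm_of_nonneg vonMangoldt_nonneg,
            Complex.norm_natCast]
          gcongr
          exact mul_le_of_le_one_left vonMangoldt_nonneg (χ.norm_le_one _)
        have h2 : ‖∑ k ∈ Ioc 0 (N / m), χ k / k - χ.LFunction 1‖ ≤ 2 * q * (m / N) := by
          refine (norm_sum_char_div_sub_LFunction_le hχ _).trans ?_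
          refine mul_le_mul_of_nonneg_left ?_ (by positivity)
          rw [div_le_div_iff₀ (by positivity) hN']
          rw [div_le_iff₀ hm0] at hdiv
          linarith
        refine (mul_le_mul h1 h2 (norm_nonneg _)
          (div_nonneg vonMangoldt_nonneg hm0.le)).trans (le_of_eq ?_)
        field_simp
    _ = (∑ m ∈ Ioc 0 N, vonMangoldt m) * (2 * q / N) := (sum_mul _ _ _).symm
    _ ≤ (Real.log 4 + 4) * N * (2 * q / N) :=
        mul_le_mul_of_nonneg_right (sum_vonMangoldt_le N) (by positivity)
    _ = 2 * q * (Real.log 4 + 4) := by field_simp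

end character

/-! ### Mertens' first theorem -/

/-- **Mertens' first theorem** for `Λ`, from two evaluations of `log N!`. -/
lemma abs_sum_vonMangoldt_div_sub_log_le (N : ℕ) :
    |∑ m ∈ Ioc 0 N, vonMangoldt m / m - Real.log N| ≤ Real.log 4 + 4 := by
  have h4 : 0 ≤ Real.log 4 := Real.log_nonneg (by norm_num)
  rcases Nat.eq_zero_or_pos N with rfl | hN
  · simp; positivity
  have hN' : (0 : ℝ) < N := by exact_mod_cast hN
  have hsum : ∑ n ∈ Ioc 0 N, Real.log n = ∑ m ∈ Ioc 0 N, vonMangoldt m * ((N / m : ℕ) : ℝ) := by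
    rw [← sum_Ioc_mul_zeta_eq_sum, vonMangoldt_mul_zeta]
    rfl
  have hfac : ∑ n ∈ Ioc 0 N, Real.log n = Real.log (N.factorial) := by
    clear hsum hN hN'
    induction N with
    | zero => simp
    | succ n ih =>
      rw [sum_Ioc_succ_top (Nat.zero_le n), ih, Nat.factorial_succ, Nat.cast_mul,
        Real.log_mul (by positivity) (by positivity), add_comm]
  have hlow : N * Real.log N - N ≤ ∑ n ∈ Ioc 0 N, Real.log n := by
    have h1 := Stirling.le_log_factorial_stirling hN.ne'
    have h2 : 0 ≤ Real.log N := Real.log_natCast_nonneg N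
    have h3 : 0 ≤ Real.log (2 * Real.pi) := Real.log_nonneg (by linarith [Real.pi_gt_three])
    rw [hfac]; linarith
  have hup : ∑ n ∈ Ioc 0 N, Real.log n ≤ N * Real.log N := by
    calc ∑ n ∈ Ioc 0 N, Real.log n ≤ ∑ n ∈ Ioc 0 N, Real.log N := by
          refine sum_le_sum fun n hn ↦ ?_
          simp only [mem_Ioc] at hn
          exact Real.log_le_log (by exact_mod_cast hn.1) (by exact_mod_cast hn.2)
      _ = N * Real.log N := by simp
  have hle : ∑ m ∈ Ioc 0 N, vonMangoldt m * ((N / m : ℕ) : ℝ) ≤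
      N * ∑ m ∈ Ioc 0 N, vonMangoldt m / m := by
    rw [mul_sum]
    refine sum_le_sum fun m _ ↦ ?_
    have := mul_le_mul_of_nonneg_left (Nat.cast_div_le (α := ℝ) (m := N) (n := m))
      (vonMangoldt_nonneg (n := m))
    exact this.trans (le_of_eq (by ring))
  have hge : N * ∑ m ∈ Ioc 0 N, vonMangoldt m / m ≤
      ∑ m ∈ Ioc 0 N, vonMangoldt m * ((N / m : ℕ) : ℝ) + ∑ m ∈ Ioc 0 N, vonMangoldt m := by
    rw [mul_sum, ← sum_add_distrib]
    refine sum_le_sum fun m _ ↦ ?_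
    have h1 : (N : ℝ) / m ≤ (N / m : ℕ) + 1 := by
      rw [← Nat.floor_div_eq_div (K := ℝ)]
      exact (Nat.lt_floor_add_one _).le
    have := mul_le_mul_of_nonneg_left h1 (vonMangoldt_nonneg (n := m))
    linarith [show (N : ℝ) * (vonMangoldt m / m) = vonMangoldt m * (N / m) by ring]
  have hpsi := sum_vonMangoldt_le N
  set S := ∑ m ∈ Ioc 0 N, vonMangoldt m / m
  rw [abs_le]
  constructor
  · refine le_of_mul_le_mul_left ?_ hN'
    nlinarith
  · refine le_of_mul_le_mul_left ?_ hN'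
    nlinarith

/-- Proper prime powers contribute a bounded amount to `∑ Λ(n) / n`. -/
lemma summable_vonMangoldt_not_prime_div :
    Summable fun n : ℕ ↦ (if n.Prime then 0 else vonMangoldt n) / n := by
  -- The residue class modulo `1` is all of `ℕ`.
  refine (vonMangoldt.summable_residueClass_non_primes_div (1 : ZMod 1)).congr fun n ↦ ?_
  have : (n : ZMod 1) = 1 := Subsingleton.elim _ _
  simp [vonMangoldt.residueClass, Set.indicator, this]

lemma vonMangoldt_not_prime_div_nonneg (n : ℕ) :
    0 ≤ (if n.Prime then 0 else vonMangoldt n) / (n : ℝ) := by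
  split_ifs
  · simp
  · exact div_nonneg vonMangoldt_nonneg n.cast_nonneg

section character
variable {q : ℕ} [NeZero q]

/-- The principal character only removes the prime powers of primes dividing `q`, which contribute a
bounded amount: the primes themselves are finitely many, and proper powers are summable. -/
lemma exists_norm_sum_principal_sub_log_le :
    ∃ C : ℝ, ∀ N : ℕ, ‖∑ n ∈ Ioc 0 N, (1 : DirichletCharacter ℂ q) n * (vonMangoldt n : ℝ) / n
      - Real.log N‖ ≤ C := by
  refine ⟨∑' n : ℕ, (if n.Prime then 0 else vonMangoldt n) / (n : ℝ) +
    ∑ p ∈ q.primeFactors, vonMangoldt p / p + (Real.log 4 + 4), fun N ↦ ?_⟩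
  have e : ∑ n ∈ Ioc 0 N, (1 : DirichletCharacter ℂ q) n * (vonMangoldt n : ℝ) / n - Real.log N =
      ∑ n ∈ Ioc 0 N, ((1 : DirichletCharacter ℂ q) n - 1) * (vonMangoldt n : ℝ) / n +
        ((∑ m ∈ Ioc 0 N, vonMangoldt m / m - Real.log N : ℝ) : ℂ) := by
    push_cast
    rw [add_sub, ← sum_add_distrib]
    congr 1
    exact sum_congr rfl fun _ _ ↦ by ring
  rw [e]
  refine (norm_add_le _ _).trans (add_le_add ?_ ?_)
  swap
  · rw [Complex.norm_real]
    exact abs_sum_vonMangoldt_div_sub_log_le N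
  have hpt : ∀ n : ℕ, ‖((1 : DirichletCharacter ℂ q) n - 1) * (vonMangoldt n : ℝ) / n‖ ≤
      (if n.Prime then 0 else vonMangoldt n) / (n : ℝ) +
        (if n ∈ q.primeFactors then vonMangoldt n / n else 0) := by
    intro n
    have hΛ : 0 ≤ vonMangoldt n / (n : ℝ) := div_nonneg vonMangoldt_nonneg n.cast_nonneg
    have hn : ‖(vonMangoldt n : ℂ) / n‖ = vonMangoldt n / n := by
      rw [norm_div, Complex.norm_real, Real.norm_of_nonneg vonMangoldt_nonneg, Complex.norm_natCast]
    by_cases hu : IsUnit (n : ZMod q)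
    · rw [MulChar.one_apply hu]
      have := vonMangoldt_not_prime_div_nonneg n
      have h2 : 0 ≤ if n ∈ q.primeFactors then vonMangoldt n / (n : ℝ) else 0 := by
        split_ifs <;> simp [hΛ]
      simpa using add_nonneg this h2
    · rw [MulChar.map_nonunit _ hu, mul_div_assoc, norm_mul, hn]
      by_cases hp : n.Prime
      · have : n ∈ q.primeFactors := by
          rw [ZMod.isUnit_prime_iff_not_dvd hp, not_not] at hu
          exact Nat.mem_primeFactors.2 ⟨hp, hu, NeZero.ne q⟩
        simp [hp, this]
      · simp [hp]
  refine (norm_sum_le _ _).trans ((sum_le_sum fun n _ ↦ hpt n).trans ?_)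
  rw [sum_add_distrib, sum_ite_mem]
  refine add_le_add
    (summable_vonMangoldt_not_prime_div.sum_le_tsum _ fun n _ ↦ vonMangoldt_not_prime_div_nonneg n)
    (sum_le_sum_of_subset_of_nonneg inter_subset_right fun n _ _ ↦
      div_nonneg vonMangoldt_nonneg n.cast_nonneg)

/-- **Mertens' first theorem in arithmetic progressions**, for the class of `1` modulo `q`. -/
lemma exists_abs_sum_log_prime_div_sub_le :
    ∃ C : ℝ, ∀ N : ℕ, |∑ n ∈ Ioc 0 N,
      (if n.Prime ∧ (n : ZMod q) = 1 then Real.log n / n else 0) - Real.log N / q.totient| ≤ C := by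
  have hφ : (0 : ℝ) < q.totient := by exact_mod_cast Nat.totient_pos.2 (NeZero.pos q)
  classical
  have hχ : ∀ χ : DirichletCharacter ℂ q, ∃ C : ℝ, ∀ N : ℕ,
      ‖∑ n ∈ Ioc 0 N, χ n * (vonMangoldt n : ℝ) / n - if χ = 1 then (Real.log N : ℂ) else 0‖ ≤ C := by
    intro χ
    by_cases h : χ = 1
    · subst h; simpa using exists_norm_sum_principal_sub_log_le (q := q)
    · simpa [h] using exists_norm_sum_char_vonMangoldt_div_le h
  choose C hC using hχ
  refine ⟨∑' n : ℕ, (if n.Prime then 0 else vonMangoldt n) / (n : ℝ) +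
    (∑ χ, C χ) / q.totient, fun N ↦ ?_⟩
  -- Orthogonality of characters, for `Λ` in place of the indicator of the primes.
  have hT : |∑ n ∈ Ioc 0 N, vonMangoldt.residueClass (1 : ZMod q) n / n
      - Real.log N / q.totient| ≤ (∑ χ, C χ) / q.totient := by
    rw [le_div_iff₀ hφ, ← abs_of_pos hφ, ← abs_mul, abs_of_pos hφ, ← Real.norm_eq_abs,
      ← Complex.norm_real]
    have e : (((∑ n ∈ Ioc 0 N, vonMangoldt.residueClass (1 : ZMod q) n / n
        - Real.log N / q.totient) * q.totient : ℝ) : ℂ) =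
        ∑ χ : DirichletCharacter ℂ q, (∑ n ∈ Ioc 0 N, χ n * (vonMangoldt n : ℝ) / n -
          if χ = 1 then (Real.log N : ℂ) else 0) := by
      have hφ' : (q.totient : ℂ) ≠ 0 := by exact_mod_cast hφ.ne'
      rw [sum_sub_distrib, sum_ite_eq' univ (1 : DirichletCharacter ℂ q), if_pos (mem_univ _),
        sum_comm, sub_mul, div_mul_cancel₀ _ hφ.ne']
      rw [Complex.ofReal_sub, Complex.ofReal_mul, Complex.ofReal_sum, sum_mul]
      congr 1
      refine sum_congr rfl fun n _ ↦ ?_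
      rw [Complex.ofReal_div, vonMangoldt.residueClass_apply isUnit_one]
      simp only [ZMod.inv_one, map_one, one_mul, Complex.ofReal_natCast]
      rw [← sum_div, mul_div_assoc, mul_right_comm, inv_mul_cancel₀ hφ', one_mul]
    rw [e]
    exact (norm_sum_le _ _).trans (sum_le_sum fun χ _ ↦ hC χ N)
  have hD : |∑ n ∈ Ioc 0 N, (if n.Prime ∧ (n : ZMod q) = 1 then Real.log n / n else 0)
      - ∑ n ∈ Ioc 0 N, vonMangoldt.residueClass (1 : ZMod q) n / n| ≤
      ∑' n : ℕ, (if n.Prime then 0 else vonMangoldt n) / (n : ℝ) := by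
    rw [← sum_sub_distrib]
    refine (abs_sum_le_sum_abs _ _).trans ?_
    refine le_trans (sum_le_sum fun n _ ↦ ?_)
      (summable_vonMangoldt_not_prime_div.sum_le_tsum (Ioc 0 N)
        fun n _ ↦ vonMangoldt_not_prime_div_nonneg n)
    have hΛ : 0 ≤ vonMangoldt n / (n : ℝ) := div_nonneg vonMangoldt_nonneg n.cast_nonneg
    by_cases hp : n.Prime <;> by_cases h1 : (n : ZMod q) = 1 <;>
      simp [vonMangoldt.residueClass, Set.indicator, hp, h1, vonMangoldt_apply_prime,
        abs_of_nonneg, hΛ]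
  refine (abs_sub_le _ _ _).trans (add_le_add hD hT)

end character

/-! ### Mertens' second theorem -/

/-- `∑ (log k - log (k - 1)) / log k` is a Riemann sum for `∫ dt / (t log t)`. -/
lemma abs_sum_log_sub_log_div_sub_le {M N : ℕ} (hM : 2 ≤ M) (hMN : M ≤ N) :
    |∑ k ∈ Ioc M N, (Real.log k - Real.log (k - 1)) / Real.log k -
      (Real.log (Real.log N) - Real.log (Real.log M))| ≤ 1 / Real.log M := by
  suffices h : |∑ k ∈ Ioc M N, (Real.log k - Real.log (k - 1)) / Real.log k -
      (Real.log (Real.log N) - Real.log (Real.log M))| ≤ 1 / Real.log M - 1 / Real.log N by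
    have : 0 ≤ 1 / Real.log N := one_div_nonneg.2 (Real.log_natCast_nonneg N)
    linarith
  induction N, hMN using Nat.le_induction with
  | base => simp
  | succ N hMN ih =>
    rw [sum_Ioc_succ_top hMN]
    have hN2 : (2 : ℝ) ≤ N := by exact_mod_cast hM.trans hMN
    push_cast
    rw [add_sub_cancel_right]
    set a := Real.log N with ha
    set b := Real.log (N + 1) with hb
    have ha0 : 0 < a := Real.log_pos (by linarith)
    have hab : a ≤ b := Real.log_le_log (by linarith) (by linarith)
    have hb0 : 0 < b := ha0.trans_le hab
    have hba1 : b - a ≤ 1 := by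
      rw [ha, hb, ← Real.log_div (by linarith) (by linarith)]
      refine (Real.log_le_sub_one_of_pos (by positivity)).trans ?_
      rw [sub_le_iff_le_add, div_le_iff₀ (by linarith)]
      linarith
    have h1 : Real.log b - Real.log a ≤ b / a - 1 := by
      rw [← Real.log_div hb0.ne' ha0.ne']
      exact Real.log_le_sub_one_of_pos (by positivity)
    have h2 : Real.log a - Real.log b ≤ a / b - 1 := by
      rw [← Real.log_div ha0.ne' hb0.ne']
      exact Real.log_le_sub_one_of_pos (by positivity)
    have h3 : (b - a) / b = 1 - a / b := by field_simp
    have h4 : b / a - 1 - (1 - a / b) ≤ 1 / a - 1 / b := by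
      have e : b / a - 1 - (1 - a / b) = (b - a) * (1 / a - 1 / b) := by field_simp
      rw [e]
      exact mul_le_of_le_one_left (sub_nonneg.2 (one_div_le_one_div_of_le ha0 hab)) hba1
    rw [h3]
    rw [abs_le] at ih ⊢
    constructor <;> linarith [ih.1, ih.2]

/-- **Mertens' second theorem in arithmetic progressions**, for the class of `1` modulo `q`. -/
lemma exists_abs_sum_inv_prime_sub_le (q : ℕ) [NeZero q] :
    ∃ C : ℝ, 0 ≤ C ∧ ∀ M N : ℕ, 2 ≤ M → M ≤ N →
      |∑ n ∈ Ioc M N, (if n.Prime ∧ (n : ZMod q) = 1 then 1 / (n : ℝ) else 0) -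
        (Real.log (Real.log N) - Real.log (Real.log M)) / q.totient| ≤ C / Real.log M := by
  obtain ⟨C, hC⟩ := exists_abs_sum_log_prime_div_sub_le (q := q)
  have hC0 : 0 ≤ C := (abs_nonneg _).trans (hC 0)
  have hφ : (1 : ℝ) ≤ q.totient := by exact_mod_cast Nat.totient_pos.2 (NeZero.pos q)
  refine ⟨2 * C + 1, by positivity, fun M N hM hMN ↦ ?_⟩
  have hM2 : (2 : ℝ) ≤ M := by exact_mod_cast hM
  have hlM : 0 < Real.log M := Real.log_pos (by linarith)
  -- `a` is the indicator of the primes weighted by `log p / p`, minus its expected value; its partial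
  -- sums are bounded by Mertens' first theorem, and the weight `1 / log n` turns `log p / p` into
  -- `1 / p`.
  let c : ℕ → ℝ := fun n ↦ if n.Prime ∧ (n : ZMod q) = 1 then Real.log n / n else 0
  let a : ℕ → ℝ := fun n ↦ c n - (Real.log n - Real.log (n - 1)) / q.totient
  have hsum : ∀ N : ℕ, ∑ k ∈ range (N + 1), a k = ∑ n ∈ Ioc 0 N, c n - Real.log N / q.totient := by
    intro N
    induction N with
    | zero => simp [a, c]
    | succ N ih =>
      rw [sum_range_succ, ih, sum_Ioc_succ_top (Nat.zero_le N)]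
      simp only [a]
      push_cast
      rw [add_sub_cancel_right]
      ring
  have hB : ∀ n, ‖∑ k ∈ range n, a k‖ ≤ C := by
    rintro (_ | n)
    · simpa using hC0
    · rw [hsum]; exact hC n
  have habel := norm_sum_Ico_smul_le_of_antitoneOn (f := fun n ↦ 1 / Real.log n) (M := M + 1)
    hB (fun i hi j hj hij ↦ by
      have hi' : M + 1 ≤ i := hi
      have : (2 : ℝ) ≤ i := by exact_mod_cast (by omega : 2 ≤ i)
      exact one_div_le_one_div_of_le (Real.log_pos (by linarith))
        (Real.log_le_log (by linarith) (by exact_mod_cast hij)))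
    (fun n _ ↦ one_div_nonneg.2 (Real.log_natCast_nonneg n)) (N + 1)
  have h1 : 1 / Real.log (M + 1 : ℕ) ≤ 1 / Real.log M :=
    one_div_le_one_div_of_le hlM (Real.log_le_log (by linarith) (by push_cast; linarith))
  have h2 := abs_sum_log_sub_log_div_sub_le hM hMN
  have e : ∑ n ∈ Ioc M N, (if n.Prime ∧ (n : ZMod q) = 1 then 1 / (n : ℝ) else 0) -
        (Real.log (Real.log N) - Real.log (Real.log M)) / q.totient =
      ∑ k ∈ Ico (M + 1) (N + 1), (1 / Real.log k) • a k +
      (∑ k ∈ Ioc M N, (Real.log k - Real.log (k - 1)) / Real.log k -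
        (Real.log (Real.log N) - Real.log (Real.log M))) / q.totient := by
    rw [Ico_add_one_add_one_eq_Ioc, sub_div (∑ k ∈ Ioc M N, _), sum_div, ← add_sub_assoc,
      ← sum_add_distrib]
    congr 1
    refine sum_congr rfl fun k hk ↦ ?_
    have hk2 : (2 : ℝ) ≤ k := by
      simp only [mem_Ioc] at hk
      exact_mod_cast (by omega : 2 ≤ k)
    have hlk : Real.log k ≠ 0 := (Real.log_pos (by linarith)).ne'
    simp only [a, c, smul_eq_mul]
    split_ifs <;> field_simp <;> ring
  rw [e]
  refine (abs_add_le _ _).trans ?_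
  rw [abs_div, abs_of_nonneg (by linarith : (0 : ℝ) ≤ q.totient)]
  have h3 := div_le_self (abs_nonneg (∑ k ∈ Ioc M N, (Real.log k - Real.log (k - 1)) / Real.log k -
        (Real.log (Real.log N) - Real.log (Real.log M)))) hφ
  have h4 : 2 * C * (1 / Real.log (M + 1 : ℕ)) ≤ 2 * C * (1 / Real.log M) :=
    mul_le_mul_of_nonneg_left h1 (by positivity)
  rw [Real.norm_eq_abs] at habel
  have : (2 * C + 1) / Real.log M = 2 * C * (1 / Real.log M) + 1 / Real.log M := by ring
  linarith

/-! ### The largest prime divisor -/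

lemma Pplus_eq_sup {n : ℕ} (hn : 2 ≤ n) : Pplus n = n.primeFactors.sup id :=
  if_neg (by omega)

lemma Pplus_mem_primeFactors {n : ℕ} (hn : 2 ≤ n) : Pplus n ∈ n.primeFactors := by
  obtain ⟨p, hp, h⟩ := exists_mem_eq_sup n.primeFactors (Nat.nonempty_primeFactors.2 hn) id
  rw [Pplus_eq_sup hn, h]
  exact hp

lemma le_Pplus {n p : ℕ} (hn : 0 < n) (hp : p.Prime) (hpn : p ∣ n) : p ≤ Pplus n := by
  rw [Pplus_eq_sup (hp.two_le.trans (Nat.le_of_dvd hn hpn))]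
  exact le_sup (f := id) (Nat.mem_primeFactors.2 ⟨hp, hpn, hn.ne'⟩)

/-- A prime divisor of `n` exceeding `√x ≥ √n` is the largest prime divisor: two such primes would
have a product exceeding `x`. -/
lemma Pplus_eq_of_sqrt_lt {n p : ℕ} {x : ℝ} (hn : 0 < n) (hx : (n : ℝ) ≤ x) (hp : p.Prime)
    (hpn : p ∣ n) (hpx : √x < p) : Pplus n = p := by
  by_contra hne
  have hle := le_Pplus hn hp hpn
  have hmem := Nat.mem_primeFactors.1
    (Pplus_mem_primeFactors (hp.two_le.trans (Nat.le_of_dvd hn hpn)))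
  have hdvd : p * Pplus n ∣ n :=
    ((Nat.coprime_primes hp hmem.1).2 (Ne.symm hne)).mul_dvd_of_dvd_of_dvd hpn hmem.2.1
  have h1 : ((p * Pplus n : ℕ) : ℝ) ≤ x := le_trans (by exact_mod_cast Nat.le_of_dvd hn hdvd) hx
  have h2 : (p : ℝ) ≤ Pplus n := by exact_mod_cast hle
  have h3 : x < p * p := by
    have hp0 : (0 : ℝ) ≤ p := p.cast_nonneg
    rw [← pow_two]
    exact (Real.sqrt_lt' (by exact_mod_cast hp.pos)).1 hpx
  push_cast at h1
  nlinarith [p.cast_nonneg (α := ℝ)]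

lemma natCast_eq_one_iff_dvd_sub_one {d p : ℕ} (hp : 1 ≤ p) : (p : ZMod d) = 1 ↔ d ∣ p - 1 := by
  rw [← Nat.modEq_iff_dvd' hp, ← ZMod.natCast_eq_natCast_iff, Nat.cast_one, eq_comm]

/-- Writing `n = p * d * k` with `p = P⁺(n)`, the integers to be counted are sorted by `p`. -/
lemma ncard_eq_sum_div (d : ℕ) (x : ℝ) (hx : 0 ≤ x) :
    ({n : ℕ | 0 < n ∧ (n : ℝ) ≤ x ∧ √x < (Pplus n : ℝ) ∧
      d ∣ n ∧ d ∣ (Pplus n - 1)} : Set ℕ).ncard =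
    ∑ p ∈ Ioc ⌊√x⌋₊ ⌊x⌋₊ with p.Prime ∧ ((p : ℕ) : ZMod d) = 1, ⌊x⌋₊ / (p * d) := by
  classical
  let s : Finset ℕ := {n ∈ Ioc 0 ⌊x⌋₊ | √x < (Pplus n : ℝ) ∧ d ∣ n ∧ d ∣ (Pplus n - 1)}
  have hs : ({n : ℕ | 0 < n ∧ (n : ℝ) ≤ x ∧ √x < (Pplus n : ℝ) ∧
      d ∣ n ∧ d ∣ (Pplus n - 1)} : Set ℕ) = s := by
    ext n
    simp only [s, Set.mem_ofPred_eq, coe_filter, mem_Ioc, Nat.le_floor_iff hx, and_assoc]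
  have two_le : ∀ n ∈ s, 2 ≤ n := by
    intro n hn
    simp only [s, mem_filter, mem_Ioc, Nat.le_floor_iff hx] at hn
    obtain ⟨⟨h0, hnx⟩, hlt, -⟩ := hn
    by_contra h
    obtain rfl : n = 1 := by omega
    have : (1 : ℝ) ≤ √x := Real.one_le_sqrt.2 (by simpa using hnx)
    simp only [Pplus, le_refl, if_true, Nat.cast_one] at hlt
    linarith
  rw [hs, Set.ncard_coe_finset, card_eq_sum_card_fiberwise (f := Pplus)
    (t := {p ∈ Ioc ⌊√x⌋₊ ⌊x⌋₊ | p.Prime ∧ (p : ZMod d) = 1})]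
  · refine sum_congr rfl fun p hp ↦ ?_
    simp only [mem_filter, mem_Ioc, Nat.floor_lt (Real.sqrt_nonneg x)] at hp
    obtain ⟨⟨hpx, -⟩, hpp, hp1⟩ := hp
    rw [natCast_eq_one_iff_dvd_sub_one hpp.one_le] at hp1
    rw [← Nat.Ioc_filter_dvd_card_eq_div]
    congr 1
    ext n
    simp only [s, mem_filter, mem_Ioc, Nat.le_floor_iff hx]
    constructor
    · rintro ⟨⟨⟨h0, hnx⟩, -, hdn, -⟩, rfl⟩
      refine ⟨⟨h0, hnx⟩, ?_⟩
      have hP : Pplus n ∣ n := by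
        rcases Nat.lt_or_ge n 2 with h | h
        · obtain rfl : n = 1 := by omega
          simp [Pplus]
        · exact Nat.dvd_of_mem_primeFactors (Pplus_mem_primeFactors h)
      -- `d ∣ p - 1` makes `d` coprime to `p`.
      refine Nat.Coprime.mul_dvd_of_dvd_of_dvd ?_ hP hdn
      rw [hpp.coprime_iff_not_dvd]
      intro h
      have := Nat.le_of_dvd (by have := hpp.two_le; omega) (h.trans hp1)
      have := hpp.two_le
      omega
    · rintro ⟨⟨h0, hnx⟩, hdvd⟩
      have := Pplus_eq_of_sqrt_lt h0 hnx hpp ((Nat.dvd_mul_right p d).trans hdvd) hpx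
      rw [this]
      exact ⟨⟨⟨h0, hnx⟩, hpx, (Nat.dvd_mul_left d p).trans hdvd, hp1⟩, rfl⟩
  · intro n hn
    have h2 := two_le n hn
    have hmem := Nat.mem_primeFactors.1 (Pplus_mem_primeFactors h2)
    simp only [s, coe_filter, Set.mem_ofPred_eq, mem_Ioc] at hn
    obtain ⟨⟨h0, hnx⟩, hlt, -, hd⟩ := hn
    simp only [coe_filter, Set.mem_ofPred_eq, mem_Ioc, Nat.floor_lt (Real.sqrt_nonneg x)]
    exact ⟨⟨hlt, (Nat.le_of_dvd h0 hmem.2.1).trans hnx⟩, hmem.1,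
      (natCast_eq_one_iff_dvd_sub_one hmem.1.one_le).2 hd⟩

/-! ### The main term and the error terms -/

lemma primeCounting_floor_le {x : ℝ} (hx : 2 ≤ x) :
    (Nat.primeCounting ⌊x⌋₊ : ℝ) ≤ (2 * Real.log 4 + 2) * x / Real.log x := by
  have hl : 0 < Real.log x := Real.log_pos (by linarith)
  refine (Chebyshev.pi_le_log4_mul_div (by linarith : 1 < x)).trans ?_
  have h1 : Real.log 4 * x / Real.log √x = 2 * Real.log 4 * x / Real.log x := by
    rw [Real.log_sqrt (by linarith)]; field_simp
  have h2 : √x ≤ 2 * x / Real.log x := by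
    rw [le_div_iff₀ hl]
    have h3 : Real.log √x ≤ √x - 1 := Real.log_le_sub_one_of_pos (Real.sqrt_pos.2 (by linarith))
    rw [Real.log_sqrt (by linarith)] at h3
    nlinarith [Real.sqrt_nonneg x, Real.mul_self_sqrt (by linarith : 0 ≤ x)]
  rw [h1]
  have : (2 * Real.log 4 + 2) * x / Real.log x =
    2 * Real.log 4 * x / Real.log x + 2 * x / Real.log x := by ring
  linarith

lemma loglog_sub_loglog_floor_mem {t : ℝ} (ht : 2 ≤ t) :
    0 ≤ Real.log (Real.log t) - Real.log (Real.log ⌊t⌋₊) ∧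
      Real.log (Real.log t) - Real.log (Real.log ⌊t⌋₊) ≤ 1 / Real.log ⌊t⌋₊ := by
  have h2 : (2 : ℝ) ≤ ⌊t⌋₊ := by exact_mod_cast Nat.le_floor (by exact_mod_cast ht)
  have hle : (⌊t⌋₊ : ℝ) ≤ t := Nat.floor_le (by linarith)
  have hlt := Nat.lt_floor_add_one t
  have hl : 0 < Real.log ⌊t⌋₊ := Real.log_pos (by linarith)
  have hll : Real.log ⌊t⌋₊ ≤ Real.log t := Real.log_le_log (by linarith) hle
  refine ⟨sub_nonneg.2 (Real.log_le_log hl hll), ?_⟩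
  rw [← Real.log_div (by linarith) hl.ne']
  refine (Real.log_le_sub_one_of_pos (div_pos (by linarith) hl)).trans ?_
  rw [div_sub_one hl.ne']
  gcongr
  rw [← Real.log_div (by linarith) (by linarith)]
  refine (Real.log_le_sub_one_of_pos (div_pos (by linarith) (by linarith))).trans ?_
  rw [sub_le_iff_le_add, div_le_iff₀ (by linarith)]
  linarith

/-- With `M = ⌊√x⌋` and `N = ⌊x⌋`, the main term `log log N - log log M` of Mertens' theorem is
close to `log log x - log log √x = log 2`. -/
lemma abs_loglog_floor_sub_log_two_le {x : ℝ} (hx : 4 ≤ x) :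
    |Real.log (Real.log ⌊x⌋₊) - Real.log (Real.log ⌊√x⌋₊) - Real.log 2| ≤
      1 / Real.log ⌊√x⌋₊ := by
  have hs : 2 ≤ √x := Real.le_sqrt_of_sq_le (by linarith)
  have h1 := loglog_sub_loglog_floor_mem (by linarith : 2 ≤ x)
  have h2 := loglog_sub_loglog_floor_mem hs
  have hl : 0 < Real.log x := Real.log_pos (by linarith)
  have e : Real.log (Real.log √x) = Real.log (Real.log x) - Real.log 2 := by
    rw [Real.log_sqrt (by linarith), Real.log_div hl.ne' (by norm_num)]
  have hM : (2 : ℝ) ≤ ⌊√x⌋₊ := by exact_mod_cast Nat.le_floor (by exact_mod_cast hs)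
  have hsx : √x ≤ x := by
    nlinarith [Real.mul_self_sqrt (by linarith : 0 ≤ x)]
  have hmono : 1 / Real.log ⌊x⌋₊ ≤ 1 / Real.log ⌊√x⌋₊ :=
    one_div_le_one_div_of_le (Real.log_pos (by linarith))
      (Real.log_le_log (by linarith) (by exact_mod_cast Nat.floor_mono hsx))
  rw [e] at h2
  rw [abs_le]
  constructor <;> linarith [h1.1, h1.2, h2.1, h2.2]

/-- Fix a positive integer `d`. There is a constant `C` such that for all `x ≥ 2`,
the number of integers `n ≤ x` whose largest prime divisor `p = P⁺(n)` satisfies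
`p > √x`, with `d ∣ n` and `d ∣ p - 1`, differs from `(log 2) x / (d φ(d))` by at
most `C x / log x`. -/
theorem count_large_prime_factor_congruence (d : ℕ) (hd : 0 < d) :
    ∃ C : ℝ, ∀ x : ℝ, 2 ≤ x →
      |(({n : ℕ | 0 < n ∧ (n : ℝ) ≤ x ∧ Real.sqrt x < (Pplus n : ℝ) ∧
            d ∣ n ∧ d ∣ (Pplus n - 1)} : Set ℕ).ncard : ℝ) -
          Real.log 2 * x / (d * Nat.totient d)| ≤ C * x / Real.log x := by
  have : NeZero d := ⟨hd.ne'⟩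
  obtain ⟨C, hC0, hC⟩ := exists_abs_sum_inv_prime_sub_le d
  have hd1 : (1 : ℝ) ≤ d := by exact_mod_cast hd
  have hφ1 : (1 : ℝ) ≤ d.totient := by exact_mod_cast Nat.totient_pos.2 hd
  have h4 : 0 ≤ Real.log 4 := Real.log_nonneg (by norm_num)
  have h16 : 0 ≤ Real.log 16 := Real.log_nonneg (by norm_num)
  have hlog2 : 0 < Real.log 2 := Real.log_pos (by norm_num)
  have hlog2' : Real.log 2 ≤ 1 := Real.log_two_lt_d9.le.trans (by norm_num)
  refine ⟨2 * Real.log 4 + 2 + (4 * C + 4) + Real.log 16, fun x hx ↦ ?_⟩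
  have hx0 : 0 ≤ x := by linarith
  have hl : 0 < Real.log x := Real.log_pos (by linarith)
  rcases lt_or_ge x 16 with hx16 | hx16
  · -- Both quantities lie in `[0, x]`, and `log x ≤ log 16`.
    have hcard : (({n : ℕ | 0 < n ∧ (n : ℝ) ≤ x ∧ Real.sqrt x < (Pplus n : ℝ) ∧
        d ∣ n ∧ d ∣ (Pplus n - 1)} : Set ℕ).ncard : ℝ) ≤ x := by
      refine le_trans ?_ (Nat.floor_le hx0)
      have hsub : ({n : ℕ | 0 < n ∧ (n : ℝ) ≤ x ∧ Real.sqrt x < (Pplus n : ℝ) ∧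
          d ∣ n ∧ d ∣ (Pplus n - 1)} : Set ℕ) ⊆ (Ioc 0 ⌊x⌋₊ : Finset ℕ) := by
        rintro n ⟨h0, hnx, -⟩
        simpa using ⟨h0, Nat.le_floor hnx⟩
      have := Set.ncard_le_ncard hsub (finite_toSet _)
      rw [Set.ncard_coe_finset, Nat.card_Ioc, Nat.sub_zero] at this
      exact_mod_cast this
    have hmain : Real.log 2 * x / (d * Nat.totient d) ≤ x :=
      (div_le_self (by positivity) (by nlinarith)).trans (mul_le_of_le_one_left hx0 hlog2')
    have hmain0 : 0 ≤ Real.log 2 * x / (d * Nat.totient d) := by positivity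
    have hfin : x ≤ (2 * Real.log 4 + 2 + (4 * C + 4) + Real.log 16) * x / Real.log x := by
      rw [le_div_iff₀ hl, mul_comm]
      refine mul_le_mul_of_nonneg_right ?_ hx0
      have := Real.log_le_log (by linarith) hx16.le
      linarith
    refine le_trans (abs_le.2 ⟨?_, ?_⟩) hfin
    · linarith [Nat.cast_nonneg (α := ℝ) ({n : ℕ | 0 < n ∧ (n : ℝ) ≤ x ∧
        Real.sqrt x < (Pplus n : ℝ) ∧ d ∣ n ∧ d ∣ (Pplus n - 1)} : Set ℕ).ncard]
    · linarith
  · rw [ncard_eq_sum_div d x hx0]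
    set M := ⌊√x⌋₊ with hM
    set N := ⌊x⌋₊ with hN
    set T : Finset ℕ := {p ∈ Ioc M N | p.Prime ∧ (p : ZMod d) = 1} with hT
    have hs4 : 4 ≤ √x := Real.le_sqrt_of_sq_le (by linarith)
    have hM4 : 4 ≤ M := Nat.le_floor (by exact_mod_cast hs4)
    have hM4' : (4 : ℝ) ≤ M := by exact_mod_cast hM4
    have hMN : M ≤ N := Nat.floor_mono (by nlinarith [Real.mul_self_sqrt hx0])
    have hlM : 0 < Real.log M := Real.log_pos (by linarith)
    -- `M ≥ √x / 2 ≥ x ^ (1 / 4)`.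
    have hinv : 1 / Real.log M ≤ 4 / Real.log x := by
      rw [div_le_div_iff₀ hlM hl]
      have h1 : √x / 2 ≤ M := by linarith [Nat.lt_floor_add_one √x]
      have h2 := Real.log_le_log (by positivity) h1
      rw [Real.log_div (by positivity) (by norm_num), Real.log_sqrt hx0] at h2
      have h3 : Real.log 16 ≤ Real.log x := Real.log_le_log (by norm_num) hx16
      rw [show (16 : ℝ) = 2 ^ 4 by norm_num, Real.log_pow] at h3
      push_cast at h3
      linarith
    have hE1 : |((∑ p ∈ T, N / (p * d) : ℕ) : ℝ) - x / d * ∑ p ∈ T, 1 / (p : ℝ)| ≤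
        (2 * Real.log 4 + 2) * x / Real.log x := by
      have hcardT : (#T : ℝ) ≤ Nat.primeCounting N := by
        rw [Nat.primeCounting, Nat.primeCounting', Nat.count_eq_card_filter_range]
        refine Nat.cast_le.2 (card_le_card fun p hp ↦ ?_)
        simp only [hT, mem_filter, mem_Ioc] at hp
        exact mem_filter.2 ⟨mem_range.2 (by omega), hp.2.1⟩
      refine le_trans ?_ (hcardT.trans (primeCounting_floor_le hx))
      rw [mul_sum, Nat.cast_sum, ← sum_sub_distrib]
      refine (abs_sum_le_sum_abs _ _).trans ?_
      rw [card_eq_sum_ones, Nat.cast_sum]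
      refine sum_le_sum fun p _ ↦ ?_
      have e : x / d * (1 / (p : ℝ)) = x / ((p * d : ℕ) : ℝ) := by
        push_cast; rw [div_mul_div_comm, mul_one, mul_comm (d : ℝ)]
      rw [e, hN, ← Nat.floor_div_natCast, abs_sub_comm, abs_of_nonneg
        (sub_nonneg.2 (Nat.floor_le (by positivity)))]
      rw [Nat.cast_one]
      linarith [Nat.lt_floor_add_one (x / ((p * d : ℕ) : ℝ))]
    have hE2 := hC M N (by omega) hMN
    rw [← sum_filter] at hE2
    have hE3 := abs_loglog_floor_sub_log_two_le (by linarith : 4 ≤ x)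
    rw [← hM, ← hN] at hE3
    set L := Real.log (Real.log N) - Real.log (Real.log M)
    have hE4 : |∑ p ∈ T, 1 / (p : ℝ) - Real.log 2 / d.totient| ≤ (4 * C + 4) / Real.log x := by
      have h1 : |L / d.totient - Real.log 2 / d.totient| ≤ 1 / Real.log M := by
        rw [← sub_div, abs_div, abs_of_nonneg (by linarith : (0 : ℝ) ≤ d.totient)]
        exact (div_le_self (abs_nonneg _) hφ1).trans hE3
      have h2 : C / Real.log M ≤ C * (4 / Real.log x) := by
        rw [div_eq_mul_one_div]
        exact mul_le_mul_of_nonneg_left hinv hC0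
      refine (abs_sub_le _ (L / d.totient) _).trans ?_
      have : (4 * C + 4) / Real.log x = C * (4 / Real.log x) + 4 / Real.log x := by ring
      linarith
    have e : ((∑ p ∈ T, N / (p * d) : ℕ) : ℝ) - Real.log 2 * x / (d * d.totient) =
        (((∑ p ∈ T, N / (p * d) : ℕ) : ℝ) - x / d * ∑ p ∈ T, 1 / (p : ℝ)) +
          x / d * (∑ p ∈ T, 1 / (p : ℝ) - Real.log 2 / d.totient) := by
      have : Real.log 2 * x / (d * d.totient) = x / d * (Real.log 2 / d.totient) := by
        rw [div_mul_div_comm, mul_comm x]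
      rw [this]; ring
    rw [e]
    refine (abs_add_le _ _).trans ?_
    have hE5 : |x / d * (∑ p ∈ T, 1 / (p : ℝ) - Real.log 2 / d.totient)| ≤
        x * ((4 * C + 4) / Real.log x) := by
      rw [abs_mul, abs_of_nonneg (by positivity)]
      exact mul_le_mul (div_le_self hx0 hd1) hE4 (abs_nonneg _) hx0
    have h16' : 0 ≤ Real.log 16 * x / Real.log x := by positivity
    have : (2 * Real.log 4 + 2 + (4 * C + 4) + Real.log 16) * x / Real.log x =
        (2 * Real.log 4 + 2) * x / Real.log x + x * ((4 * C + 4) / Real.log x) +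
          Real.log 16 * x / Real.log x := by ring
    linarith
end

section
/- Let A₂(x) = #{n ≤ x : √x/log x < P⁺(n) ≤ √x}. Then limsup_{x→∞} A₂(x)·(log x)/(x·log log x) ≤ 2; in particular A₂(x) = O(x·log log x/log x). -/
/-- `A₂(x) = #{n ≤ x : √x / log x < P⁺(n) ≤ √x}`. -/
noncomputable def A2 (x : ℝ) : ℝ :=
  (({n : ℕ | 0 < n ∧ (n : ℝ) ≤ x ∧ Real.sqrt x / Real.log x < (Pplus n : ℝ) ∧
      (Pplus n : ℝ) ≤ Real.sqrt x} : Set ℕ).ncard : ℝ)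

open Finset Filter Topology ArithmeticFunction

/-- The partial sums `∑_{d ≤ N} Λ(d)/d` of Mertens' first theorem. -/
noncomputable def mertensSum (N : ℕ) : ℝ := ∑ d ∈ Ioc 0 N, Λ d / d

lemma log_factorial_eq_sum (N : ℕ) :
    Real.log (N.factorial : ℝ) = ∑ d ∈ Ioc 0 N, Λ d * ((N / d : ℕ) : ℝ) := by
  rw [← sum_Ioc_mul_zeta_eq_sum, vonMangoldt_mul_zeta]
  induction N with
  | zero => simp
  | succ n ih =>
    rw [← Finset.insert_Ioc_right_eq_Ioc_add_one (Nat.zero_le n), Finset.sum_insert (by simp), ← ih,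
      Nat.factorial_succ, Nat.cast_mul, Real.log_mul (by positivity) (by positivity)]
    simp

lemma log_sub_one_le_mertensSum {N : ℕ} (hN : 0 < N) : Real.log N - 1 ≤ mertensSum N := by
  have h1 : Real.log (N.factorial : ℝ) ≤ N * mertensSum N := by
    rw [log_factorial_eq_sum, mertensSum, Finset.mul_sum]
    refine Finset.sum_le_sum fun d _ => ?_
    calc Λ d * ((N / d : ℕ) : ℝ) ≤ Λ d * ((N : ℝ) / d) :=
          mul_le_mul_of_nonneg_left Nat.cast_div_le vonMangoldt_nonneg
      _ = N * (Λ d / d) := by ring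
  have h2 := Stirling.le_log_factorial_stirling hN.ne'
  have hN1 : (1 : ℝ) ≤ N := by exact_mod_cast hN
  have h3 := Real.log_nonneg hN1
  have h4 : 0 ≤ Real.log (2 * Real.pi) := Real.log_nonneg (by linarith [Real.pi_gt_three])
  have h5 : (N : ℝ) * (Real.log N - 1) ≤ N * mertensSum N := by linarith
  exact le_of_mul_le_mul_left h5 (by linarith)

lemma mertensSum_le (N : ℕ) : mertensSum N ≤ Real.log N + (Real.log 4 + 4) := by
  rcases Nat.eq_zero_or_pos N with rfl | hN
  · have : 0 ≤ Real.log 4 := Real.log_nonneg (by norm_num)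
    simp [mertensSum]; linarith
  have hN1 : (1 : ℝ) ≤ N := by exact_mod_cast hN
  have h1 : N * mertensSum N ≤ Real.log (N.factorial : ℝ) + Chebyshev.psi N := by
    rw [log_factorial_eq_sum, mertensSum, Finset.mul_sum, Chebyshev.psi, Nat.floor_natCast,
      ← Finset.sum_add_distrib]
    refine Finset.sum_le_sum fun d hd => ?_
    have h : (N : ℝ) / d ≤ ((N / d : ℕ) : ℝ) + 1 := by
      rw [← Nat.floor_div_eq_div (K := ℝ)]; exact (Nat.lt_floor_add_one _).le
    calc N * (Λ d / d) = Λ d * ((N : ℝ) / d) := by ring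
      _ ≤ Λ d * (((N / d : ℕ) : ℝ) + 1) := mul_le_mul_of_nonneg_left h vonMangoldt_nonneg
      _ = _ := by ring
  have h2 : Chebyshev.psi N ≤ (Real.log 4 + 4) * N :=
    Chebyshev.psi_le_const_mul_self (Nat.cast_nonneg _)
  have h3 : Real.log (N.factorial : ℝ) ≤ N * Real.log N := by
    rw [← Real.log_pow]
    exact Real.log_le_log (by positivity) (by exact_mod_cast Nat.factorial_le_pow N)
  have h5 : (N : ℝ) * mertensSum N ≤ N * (Real.log N + (Real.log 4 + 4)) := by linarith
  exact le_of_mul_le_mul_left h5 (by linarith)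

lemma Pplus_prime_dvd {n : ℕ} (hn : 1 < n) : (Pplus n).Prime ∧ Pplus n ∣ n := by
  obtain ⟨p, hp, h⟩ := Finset.exists_mem_eq_sup n.primeFactors
    (Nat.nonempty_primeFactors.2 hn) id
  rw [Pplus, if_neg (by omega), h]
  exact ⟨Nat.prime_of_mem_primeFactors hp, Nat.dvd_of_mem_primeFactors hp⟩

/-- The bound `1 ≤ y` excludes `n = 1`, for which `P⁺(n) = 1` is not a prime divisor. -/
lemma A2_le_sum {x : ℝ} (hy : 1 ≤ √x / Real.log x) :
    A2 x ≤ ∑ p ∈ (Ioc ⌊√x / Real.log x⌋₊ ⌊√x⌋₊).filter Nat.Prime, x / p := by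
  have hx : 0 ≤ x := by
    by_contra h
    rw [Real.sqrt_eq_zero_of_nonpos (by linarith)] at hy
    norm_num at hy
  set s := (Ioc ⌊√x / Real.log x⌋₊ ⌊√x⌋₊).filter Nat.Prime with hs
  have hsub : {n : ℕ | 0 < n ∧ (n : ℝ) ≤ x ∧ √x / Real.log x < (Pplus n : ℝ) ∧
      (Pplus n : ℝ) ≤ √x} ⊆
      (s.biUnion fun p => (range (⌊x⌋₊ + 1)).filter fun k => k ≠ 0 ∧ p ∣ k : Finset ℕ) := by
    rintro n ⟨h0, hnx, h1, h2⟩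
    have hn : 1 < n := by
      by_contra h
      obtain rfl : n = 1 := by omega
      have : Pplus 1 = 1 := rfl
      rw [this] at h1
      push_cast at h1
      linarith
    obtain ⟨hp, hd⟩ := Pplus_prime_dvd hn
    simp only [coe_biUnion, Set.mem_iUnion, mem_coe, mem_filter, mem_range, hs, mem_Ioc]
    exact ⟨Pplus n, ⟨⟨(Nat.floor_lt (by linarith)).2 h1, Nat.le_floor h2⟩, hp⟩,
      Nat.lt_succ_of_le (Nat.le_floor hnx), h0.ne', hd⟩
  have h1 := Set.ncard_le_ncard hsub (Finset.finite_toSet _)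
  rw [Set.ncard_coe_finset] at h1
  calc A2 x ≤ ((∑ p ∈ s, ⌊x⌋₊ / p : ℕ) : ℝ) := by
        rw [A2]
        exact_mod_cast h1.trans (card_biUnion_le.trans
          (Finset.sum_le_sum fun p _ => (Nat.card_multiples' _ p).le))
    _ ≤ ∑ p ∈ s, x / p := by
        push_cast
        refine Finset.sum_le_sum fun p _ => Nat.cast_div_le.trans ?_
        gcongr
        exact Nat.floor_le hx

/-- An explicit form of the estimate; `log x / 2 - log log x` is the logarithm of the lower
endpoint `√x / log x`. -/
lemma A2_le {x : ℝ} (hx : 1 < x) (hL : 1 < Real.log x) (hy : 1 < √x / Real.log x) :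
    A2 x ≤ x * ((Real.log (Real.log x) + (Real.log 4 + Real.log 2 + 5)) /
      (Real.log x / 2 - Real.log (Real.log x))) := by
  have hsx : 0 < √x := Real.sqrt_pos.2 (by linarith)
  have hy2 : Real.log (√x / Real.log x) = Real.log x / 2 - Real.log (Real.log x) := by
    rw [Real.log_div hsx.ne' (by linarith), Real.log_sqrt (by linarith)]
  rw [← hy2]
  have hly : 0 < Real.log (√x / Real.log x) := Real.log_pos hy
  have hyz : √x / Real.log x ≤ √x := div_le_self hsx.le hL.le
  have hz1 : 1 ≤ √x := by linarith
  set y := √x / Real.log x with hydef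
  have hfl : 1 ≤ ⌊y⌋₊ := Nat.le_floor (by exact_mod_cast hy.le)
  have hfl' : (1 : ℝ) ≤ ⌊y⌋₊ := by exact_mod_cast hfl
  have hdiff : ∑ d ∈ Ioc ⌊y⌋₊ ⌊√x⌋₊, Λ d / (d : ℝ) = mertensSum ⌊√x⌋₊ - mertensSum ⌊y⌋₊ := by
    rw [eq_sub_iff_add_eq', mertensSum, mertensSum]
    exact Finset.sum_Ioc_consecutive _ (Nat.zero_le _) (Nat.floor_mono hyz)
  have hup : mertensSum ⌊√x⌋₊ ≤ Real.log x / 2 + (Real.log 4 + 4) := by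
    refine (mertensSum_le _).trans ?_
    rw [← Real.log_sqrt (by linarith)]
    gcongr
    · exact_mod_cast Nat.floor_pos.2 hz1
    · exact Nat.floor_le hsx.le
  have hlow : Real.log y - Real.log 2 - 1 ≤ mertensSum ⌊y⌋₊ := by
    refine le_trans ?_ (log_sub_one_le_mertensSum hfl)
    rw [← Real.log_div (by linarith) (by norm_num)]
    have : y / 2 ≤ ⌊y⌋₊ := by linarith [Nat.lt_floor_add_one y]
    gcongr
  calc A2 x ≤ ∑ p ∈ (Ioc ⌊y⌋₊ ⌊√x⌋₊).filter Nat.Prime, x / p := A2_le_sum hy.le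
    _ ≤ ∑ p ∈ (Ioc ⌊y⌋₊ ⌊√x⌋₊).filter Nat.Prime, x / Real.log y * (Λ p / p) := by
        refine Finset.sum_le_sum fun p hp => ?_
        obtain ⟨hp1, hp2⟩ := mem_filter.1 hp
        rw [vonMangoldt_apply_prime hp2]
        have hyp : y < p := (Nat.floor_lt (by linarith)).1 (mem_Ioc.1 hp1).1
        have hlp : Real.log y ≤ Real.log p := Real.log_le_log (by linarith) hyp.le
        have hp0 : (0 : ℝ) < p := by linarith
        calc x / p = x / p * 1 := (mul_one _).symm
          _ ≤ x / p * (Real.log p / Real.log y) := by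
              gcongr
              exact (one_le_div hly).2 hlp
          _ = _ := by ring
    _ ≤ ∑ p ∈ Ioc ⌊y⌋₊ ⌊√x⌋₊, x / Real.log y * (Λ p / p) := by
        refine Finset.sum_le_sum_of_subset_of_nonneg (filter_subset _ _) fun d _ _ => ?_
        have : 0 ≤ Λ d := vonMangoldt_nonneg
        positivity
    _ = x * ((mertensSum ⌊√x⌋₊ - mertensSum ⌊y⌋₊) / Real.log y) := by
        rw [← Finset.mul_sum, hdiff]; ring
    _ ≤ _ := by
        gcongr
        linarith

lemma tendsto_loglog_div_log :
    Tendsto (fun x : ℝ => Real.log (Real.log x) / Real.log x) atTop (𝓝 0) := by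
  have h := Real.isLittleO_log_id_atTop.tendsto_div_nhds_zero
  exact h.comp Real.tendsto_log_atTop

/-- `limsup_{x→∞} A₂(x) log x / (x log log x) ≤ 2`; in particular
`A₂(x) = O(x log log x / log x)`. -/
theorem A2_bound :
    Filter.limsup (fun x : ℝ => A2 x * Real.log x / (x * Real.log (Real.log x)))
        Filter.atTop ≤ 2 ∧
      A2 =O[Filter.atTop] (fun x : ℝ => x * Real.log (Real.log x) / Real.log x) := by
  set C : ℝ := Real.log 4 + Real.log 2 + 5
  set g : ℝ → ℝ := fun x => (1 + C / Real.log (Real.log x)) /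
    (1 / 2 - Real.log (Real.log x) / Real.log x) with hg
  have hLL : Tendsto (fun x : ℝ => Real.log (Real.log x)) atTop atTop :=
    Real.tendsto_log_atTop.comp Real.tendsto_log_atTop
  have hg2 : Tendsto g atTop (𝓝 2) := by
    have h := ((tendsto_const_nhds (x := (1 : ℝ))).add (hLL.const_div_atTop C)).div
      ((tendsto_const_nhds (x := (1 / 2 : ℝ))).sub tendsto_loglog_div_log) (by norm_num)
    rwa [show ((1 : ℝ) + 0) / (1 / 2 - 0) = 2 by norm_num] at h
  have hle : ∀ᶠ x : ℝ in atTop, 0 < x ∧ 0 < Real.log x ∧ 0 < Real.log (Real.log x) ∧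
      A2 x * Real.log x / (x * Real.log (Real.log x)) ≤ g x := by
    filter_upwards [eventually_gt_atTop 1, Real.tendsto_log_atTop.eventually_gt_atTop 1,
      hLL.eventually_gt_atTop 0,
      tendsto_loglog_div_log.eventually_lt_const (show (0 : ℝ) < 1 / 2 by norm_num)]
      with x hx hL hl hlt
    have hL0 : 0 < Real.log x := by linarith
    have hd : 0 < Real.log x / 2 - Real.log (Real.log x) := by
      rw [div_lt_iff₀ hL0] at hlt; linarith
    have hsx : 0 < √x := Real.sqrt_pos.2 (by linarith)
    have hy : 1 < √x / Real.log x := by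
      rw [← Real.log_pos_iff (by positivity), Real.log_div hsx.ne' hL0.ne',
        Real.log_sqrt (by linarith)]
      exact hd
    refine ⟨by linarith, hL0, hl, ?_⟩
    have hx0 : 0 < x := by linarith
    rw [div_le_iff₀ (by positivity)]
    calc A2 x * Real.log x ≤ x * ((Real.log (Real.log x) + C) /
          (Real.log x / 2 - Real.log (Real.log x))) * Real.log x := by
          gcongr
          exact A2_le hx hL hy
      _ = g x * (x * Real.log (Real.log x)) := by
          have hd' : 1 / 2 - Real.log (Real.log x) / Real.log x =
              (Real.log x / 2 - Real.log (Real.log x)) / Real.log x := by field_simp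
          simp only [hg, hd']
          field_simp
  have hA : ∀ x, 0 ≤ A2 x := fun x => Nat.cast_nonneg _
  constructor
  · rw [← hg2.limsup_eq]
    refine limsup_le_limsup (hle.mono fun x h => h.2.2.2) ?_ hg2.isBoundedUnder_le
    -- Nonnegativity rules out the junk value of a real limsup that is unbounded below.
    refine IsBoundedUnder.isCoboundedUnder_le ⟨0, ?_⟩
    rw [eventually_map]
    filter_upwards [hle] with x ⟨h0, h1, h2, _⟩
    have := hA x
    positivity
  · refine Asymptotics.IsBigO.of_bound 3 ?_
    filter_upwards [hle, hg2.eventually_le_const (show (2 : ℝ) < 3 by norm_num)]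
      with x ⟨h0, h1, h2, h3⟩ h4
    have h5 := h3.trans h4
    rw [div_le_iff₀ (by positivity)] at h5
    rw [Real.norm_of_nonneg (hA x), Real.norm_of_nonneg (by positivity), ← mul_div_assoc,
      le_div_iff₀ h1]
    exact h5
end

section
/- Let f : ℕ → [0,∞) be weakly super-multiplicative with normal order g, where g : (0,∞) → (0,∞) is strictly positive and is either non-decreasing or log-uniformly continuous. Then exactly one of the following holds: (i) for every real M the set {n : f(n) ≤ n^M} has natural density 0; or (ii) there exists a real constant c such that f(n) ≤ n^c for all n ≥ 2 and, for every ε > 0, the set {n : f(n) < n^{c−ε}} has natural density 0. -/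
/-!
The growth of `g` is measured by the set of its lower exponents, the reals `d` with
`κ * x ^ d ≤ g x` for some `κ > 0` and all large `x`.

Weak super-multiplicativity gives a positive proportion of `m ∈ [x, (1+τ)x]` with
`f (n * m) ≥ (1-τ) * f n * f m`; as the exceptions to the normal order have density zero, some
such `m` has `f m ≈ g m` and `f (n * m) ≈ g (n * m)` (`exists_good_multiplier`). Either regularity
hypothesis turns this into `(1-η) * f n * g x ≤ g (l * x)` for all large `x`, with a fixed `l`
close to `n` (`exists_dilation`). Iterating this inequality from a compact interval, on which `g` is
bounded below, shows that `d` is a lower exponent as soon as `n ^ d < f n`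
(`isLowerExponent_of_rpow_lt`).

If the lower exponents are unbounded, then `f n ≥ g n / 2` for almost all `n` gives the first
alternative. Otherwise their supremum `c` satisfies `f n ≤ n ^ c` for every `n ≥ 2`, and
`f n ≥ n ^ (c - ε)` for almost all `n`. The alternatives exclude each other, because
`{n | 2 ≤ n}` does not have density zero.
-/

/-- The upper density of a set of natural numbers:
`limsup_{N→∞} #{n ∈ S : n ≤ N} / N`. -/
noncomputable def upperDensity (S : Set ℕ) : ℝ :=
  Filter.limsup (fun N : ℕ => (({n | n ∈ S ∧ n ≤ N} : Set ℕ).ncard : ℝ) / N) Filter.atTop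

/-- `S` has natural density `α` if `#{n ∈ S : n ≤ N} / N → α`. -/
def HasNatDensity (S : Set ℕ) (α : ℝ) : Prop :=
  Filter.Tendsto (fun N : ℕ => (({n | n ∈ S ∧ n ≤ N} : Set ℕ).ncard : ℝ) / N)
    Filter.atTop (nhds α)

/-- `f` is weakly super-multiplicative: for every `n` and `ε > 0` there exist
`x₀ > 0` and `δ > 0` such that for all `x > x₀` the number of integers
`m ∈ [x, (1+ε)x]` with `f(nm) ≥ (1-ε) f(n) f(m)` is at least `δ x`. -/
def WeaklySuperMult (f : ℕ → ℝ) : Prop :=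
  ∀ n : ℕ, 0 < n → ∀ ε : ℝ, 0 < ε → ∃ x₀ : ℝ, 0 < x₀ ∧ ∃ δ : ℝ, 0 < δ ∧
    ∀ x : ℝ, x₀ < x →
      δ * x ≤
        (({m : ℕ | (x ≤ (m : ℝ) ∧ (m : ℝ) ≤ (1 + ε) * x) ∧
            (1 - ε) * f n * f m ≤ f (n * m)} : Set ℕ).ncard : ℝ)

/-- `f` has normal order `g`: for every `ε > 0` the set
`{n : |f(n) - g(n)| ≥ ε g(n)}` has upper density `0`. -/
def HasNormalOrder (f : ℕ → ℝ) (g : ℝ → ℝ) : Prop :=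
  ∀ ε : ℝ, 0 < ε → upperDensity {n : ℕ | ε * g n ≤ |f n - g n|} = 0

/-- `g` is log-uniformly continuous: for every `ε > 0` there is `δ > 0` such that
`|x/y - 1| < δ` implies `|g(x)/g(y) - 1| < ε` for positive `x, y`. -/
def LogUniformlyContinuous (g : ℝ → ℝ) : Prop :=
  ∀ ε : ℝ, 0 < ε → ∃ δ : ℝ, 0 < δ ∧ ∀ x y : ℝ, 0 < x → 0 < y →
    |x / y - 1| < δ → |g x / g y - 1| < ε

/-! ### Sets of natural density zero -/

/-- The set `{n | n ∈ S ∧ n ≤ N}` whose cardinality enters both notions of density is finite. -/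
lemma finite_count (S : Set ℕ) (N : ℕ) : ({n | n ∈ S ∧ n ≤ N} : Set ℕ).Finite :=
  (Set.finite_Iic N).subset fun _ h => h.2

lemma count_div_le_two (S : Set ℕ) (N : ℕ) :
    (({n | n ∈ S ∧ n ≤ N} : Set ℕ).ncard : ℝ) / N ≤ 2 := by
  rcases Nat.eq_zero_or_pos N with rfl | hN
  · simp
  · have h1 : ({n | n ∈ S ∧ n ≤ N} : Set ℕ).ncard ≤ N + 1 := by
      have h2 : ({n | n ∈ S ∧ n ≤ N} : Set ℕ).ncard ≤ (Set.Iic N).ncard :=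
        Set.ncard_le_ncard (fun _ h => h.2) (Set.finite_Iic N)
      simpa [Set.ncard_eq_toFinset_card'] using h2
    have h3 : (({n | n ∈ S ∧ n ≤ N} : Set ℕ).ncard : ℝ) ≤ N + 1 := by exact_mod_cast h1
    have h4 : (1 : ℝ) ≤ N := by exact_mod_cast hN
    rw [div_le_iff₀ (by linarith)]
    linarith

lemma hasNatDensity_zero_of_upperDensity {S : Set ℕ} (h : upperDensity S = 0) :
    HasNatDensity S 0 := by
  have hb : Filter.IsBoundedUnder (· ≤ ·) Filter.atTop
      (fun N : ℕ => (({n | n ∈ S ∧ n ≤ N} : Set ℕ).ncard : ℝ) / N) :=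
    Filter.isBoundedUnder_of ⟨2, count_div_le_two S⟩
  have hb' : Filter.IsBoundedUnder (· ≥ ·) Filter.atTop
      (fun N : ℕ => (({n | n ∈ S ∧ n ≤ N} : Set ℕ).ncard : ℝ) / N) :=
    Filter.isBoundedUnder_of ⟨0, fun N => by positivity⟩
  refine tendsto_of_le_liminf_of_limsup_le ?_ (le_of_eq h) hb hb'
  exact Filter.le_liminf_of_le hb.isCoboundedUnder_ge
    (Filter.Eventually.of_forall fun N => by positivity)

/-- Density zero passes to a set contained, up to finitely many elements, in a set of density
zero. -/
lemma HasNatDensity.zero_mono {S T : Set ℕ} (hT : HasNatDensity T 0) (N₀ : ℕ)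
    (hST : ∀ n ∈ S, N₀ ≤ n → n ∈ T) : HasNatDensity S 0 := by
  have h1 : Filter.Tendsto (fun N : ℕ => (N₀ : ℝ) / N) Filter.atTop (nhds 0) :=
    tendsto_const_div_atTop_nhds_zero_nat _
  have h2 := h1.add hT
  rw [add_zero] at h2
  refine squeeze_zero (fun N => by positivity) (fun N => ?_) h2
  rw [← add_div]
  gcongr
  have h3 : ({n | n ∈ S ∧ n ≤ N} : Set ℕ) ⊆ Set.Iio N₀ ∪ {n | n ∈ T ∧ n ≤ N} := by
    rintro n ⟨hn, hnN⟩
    rcases lt_or_ge n N₀ with h | h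
    · exact Or.inl h
    · exact Or.inr ⟨hST n hn h, hnN⟩
  have h4 := (Set.ncard_le_ncard h3 ((Set.finite_Iio N₀).union (finite_count T N))).trans
    (Set.ncard_union_le _ _)
  have h5 : (Set.Iio N₀).ncard = N₀ := by simp [Set.ncard_eq_toFinset_card']
  rw [h5] at h4
  exact_mod_cast h4

lemma not_hasNatDensity_zero {S : Set ℕ} (hS : ∀ n, 2 ≤ n → n ∈ S) : ¬ HasNatDensity S 0 := by
  intro h
  have huniv : HasNatDensity Set.univ 0 := h.zero_mono 2 fun n _ hn => hS n hn
  have h1 := (huniv.eventually (gt_mem_nhds (show (0 : ℝ) < 1 by norm_num))).and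
    (Filter.eventually_ge_atTop 1)
  obtain ⟨N, hN, hN1⟩ := h1.exists
  have h2 : ({n | n ∈ Set.univ ∧ n ≤ N} : Set ℕ).ncard = N + 1 := by
    have : ({n | n ∈ Set.univ ∧ n ≤ N} : Set ℕ) = Set.Iic N := by ext; simp
    rw [this]; simp [Set.ncard_eq_toFinset_card']
  have h3 : (0 : ℝ) < N := by exact_mod_cast hN1
  rw [h2, div_lt_one h3] at hN
  push_cast at hN
  linarith

/-! ### From super-multiplicativity of `f` to dilations of `g` -/

/-- Every large `x` has a multiplier `m ∈ [x, (1+τ)x]` along which super-multiplicativity of `f`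
becomes an inequality for `g`: the good `m` supplied by weak super-multiplicativity outnumber those
for which `m` or `n * m` is an exception to the normal order. -/
lemma exists_good_multiplier {f : ℕ → ℝ} {g : ℝ → ℝ} (hf0 : ∀ n, 0 ≤ f n)
    (hwsm : WeaklySuperMult f) (hno : HasNormalOrder f g) {n : ℕ} (hn : 0 < n) {τ : ℝ}
    (hτ : 0 < τ) (hτ1 : τ < 1) :
    ∃ X : ℝ, 0 < X ∧ ∀ x : ℝ, X ≤ x → ∃ m : ℕ, x ≤ m ∧ (m : ℝ) ≤ (1 + τ) * x ∧
      (1 - τ) ^ 2 * f n * g m ≤ (1 + τ) * g ((n : ℝ) * m) := by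
  obtain ⟨x₀, hx₀, δ, hδ, H⟩ := hwsm n hn τ hτ
  set E : Set ℕ := {k : ℕ | τ * g k ≤ |f k - g k|} with hE
  have hE0 : HasNatDensity E 0 := hasNatDensity_zero_of_upperDensity (hno τ hτ)
  have hnR : (0 : ℝ) < n := by exact_mod_cast hn
  have hσ : 0 < δ / (4 * n * (1 + τ)) := by positivity
  obtain ⟨N₀, hN₀⟩ := Filter.eventually_atTop.1 (hE0.eventually (gt_mem_nhds hσ))
  refine ⟨max (x₀ + 1) (N₀ + 1), by positivity, fun x hx => ?_⟩
  have hx1 : x₀ < x := by linarith [le_max_left (x₀ + 1) ((N₀ : ℝ) + 1)]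
  have hx2 : (N₀ : ℝ) + 1 ≤ x := (le_max_right _ _).trans hx
  have hx0 : 0 < x := hx₀.trans hx1
  by_contra! hcon
  set K : ℕ := ⌊(1 + τ) * x⌋₊ with hK
  have hKx : (K : ℝ) ≤ (1 + τ) * x := Nat.floor_le (by positivity)
  have hKN : N₀ + 1 ≤ K := Nat.le_floor (by push_cast; nlinarith)
  have hnK : N₀ + 1 ≤ n * K := hKN.trans (Nat.le_mul_of_pos_left K hn)
  have hcount := hN₀ (n * K) (by omega)
  have hnK0 : (0 : ℝ) < ((n * K : ℕ) : ℝ) := by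
    exact_mod_cast (show 0 < n * K by omega)
  rw [div_lt_iff₀ hnK0] at hcount
  have hsub : ({m : ℕ | (x ≤ (m : ℝ) ∧ (m : ℝ) ≤ (1 + τ) * x) ∧
      (1 - τ) * f n * f m ≤ f (n * m)} : Set ℕ) ⊆
      {k | k ∈ E ∧ k ≤ n * K} ∪ (fun m => n * m) ⁻¹' {k | k ∈ E ∧ k ≤ n * K} := by
    rintro m ⟨⟨hxm, hmx⟩, hm⟩
    have hmK : m ≤ K := Nat.le_floor hmx
    by_cases hmE : m ∈ E
    · exact Or.inl ⟨hmE, hmK.trans (Nat.le_mul_of_pos_left K hn)⟩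
    by_cases hnmE : n * m ∈ E
    · exact Or.inr ⟨hnmE, Nat.mul_le_mul_left n hmK⟩
    exfalso
    rw [hE, Set.mem_ofPred_eq, not_le, abs_lt] at hmE hnmE
    have h1 := hcon m hxm hmx
    have h2 : (1 - τ) * g m ≤ f m := by linarith [hmE.1]
    have h3 : f (n * m) ≤ (1 + τ) * g ((n : ℝ) * m) := by
      have := hnmE.2; push_cast at this; linarith
    have h4 : (1 - τ) * f n * ((1 - τ) * g m) ≤ (1 - τ) * f n * f m :=
      mul_le_mul_of_nonneg_left h2 (mul_nonneg (by linarith) (hf0 n))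
    nlinarith
  have hinj : Function.Injective (fun m : ℕ => n * m) := fun a b h =>
    Nat.eq_of_mul_eq_mul_left hn h
  have hfin := finite_count E (n * K)
  have hfin2 := hfin.preimage (f := fun m => n * m) hinj.injOn
  have hpre : ((fun m => n * m) ⁻¹' {k | k ∈ E ∧ k ≤ n * K}).ncard ≤
      ({k | k ∈ E ∧ k ≤ n * K} : Set ℕ).ncard := by
    rw [← Set.ncard_image_of_injective _ hinj]
    exact Set.ncard_le_ncard (Set.image_preimage_subset _ _) hfin
  have hcard := (Set.ncard_le_ncard hsub (hfin.union hfin2)).trans (Set.ncard_union_le _ _)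
  have hcard2 : (({m : ℕ | (x ≤ (m : ℝ) ∧ (m : ℝ) ≤ (1 + τ) * x) ∧
      (1 - τ) * f n * f m ≤ f (n * m)} : Set ℕ).ncard : ℝ) ≤
      2 * (({k | k ∈ E ∧ k ≤ n * K} : Set ℕ).ncard : ℝ) := by
    exact_mod_cast (by omega : _ ≤ 2 * ({k | k ∈ E ∧ k ≤ n * K} : Set ℕ).ncard)
  have hlow := H x hx1
  have hup : δ / (4 * n * (1 + τ)) * ((n * K : ℕ) : ℝ) ≤ δ * x / 4 := by
    push_cast
    calc δ / (4 * n * (1 + τ)) * (n * K) ≤ δ / (4 * n * (1 + τ)) * (n * ((1 + τ) * x)) := by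
          gcongr
      _ = δ * x / 4 := by field_simp
  have : 0 < δ * x := by positivity
  linarith

/-- Up to a factor `1 - η`, dilating the argument of `g` by some fixed `l` slightly above `n`
multiplies `g` by at least `f n`. For non-decreasing `g` one takes `l = (1 + η / 3) * n`, for
log-uniformly continuous `g` simply `l = n`. -/
lemma exists_dilation {f : ℕ → ℝ} {g : ℝ → ℝ} (hf0 : ∀ n, 0 ≤ f n)
    (hwsm : WeaklySuperMult f) (hgpos : ∀ x : ℝ, 0 < x → 0 < g x)
    (hgreg : (∀ x y : ℝ, 0 < x → x ≤ y → g x ≤ g y) ∨ LogUniformlyContinuous g)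
    (hno : HasNormalOrder f g) {n : ℕ} (hn : 0 < n) {η : ℝ} (hη : 0 < η) (hη1 : η < 1) :
    ∃ l : ℝ, n ≤ l ∧ l ≤ (1 + η) * n ∧ ∃ X : ℝ, 0 < X ∧ ∀ x : ℝ, X ≤ x →
      (1 - η) * f n * g x ≤ g (l * x) := by
  have hnR : (0 : ℝ) < n := by exact_mod_cast hn
  rcases hgreg with hmono | hluc
  · set τ := η / 3 with hτ
    obtain ⟨X, hX, H⟩ := exists_good_multiplier hf0 hwsm hno hn (τ := τ) (by positivity)
      (by linarith)
    refine ⟨(1 + τ) * n, by nlinarith, by nlinarith, X, hX, fun x hx => ?_⟩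
    have hx0 : 0 < x := hX.trans_le hx
    obtain ⟨m, hxm, hmx, hm⟩ := H x hx
    have hm0 : (0 : ℝ) < m := hx0.trans_le hxm
    have h1 : g x ≤ g m := hmono _ _ hx0 hxm
    have h2 : g ((n : ℝ) * m) ≤ g ((1 + τ) * n * x) :=
      hmono _ _ (by positivity) (by nlinarith)
    have h3 : 0 ≤ f n * g x := mul_nonneg (hf0 n) (hgpos x hx0).le
    have hτ0 : 0 < 1 + τ := by positivity
    refine le_of_mul_le_mul_left ?_ hτ0
    calc (1 + τ) * ((1 - η) * f n * g x) ≤ (1 - τ) ^ 2 * (f n * g x) := by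
          rw [show η = 3 * τ by rw [hτ]; ring]
          nlinarith [mul_nonneg (sq_nonneg τ) h3]
      _ ≤ (1 - τ) ^ 2 * (f n * g m) :=
          mul_le_mul_of_nonneg_left (mul_le_mul_of_nonneg_left h1 (hf0 n)) (sq_nonneg _)
      _ = (1 - τ) ^ 2 * f n * g m := by ring
      _ ≤ (1 + τ) * g ((n : ℝ) * m) := hm
      _ ≤ (1 + τ) * g ((1 + τ) * n * x) := mul_le_mul_of_nonneg_left h2 hτ0.le
  · set σ := η / 5 with hσ
    have hσ0 : 0 < σ := by positivity
    have hσ1 : σ < 1 / 5 := by linarith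
    obtain ⟨δ, hδ, hg⟩ := hluc σ hσ0
    set τ := min σ (δ / 2) with hτ
    have hτ0 : 0 < τ := by positivity
    have hτσ : τ ≤ σ := min_le_left _ _
    have hτδ : τ < δ := (min_le_right _ _).trans_lt (by linarith)
    obtain ⟨X, hX, H⟩ := exists_good_multiplier hf0 hwsm hno hn hτ0 (by linarith)
    refine ⟨n, le_rfl, by nlinarith, X, hX, fun x hx => ?_⟩
    have hx0 : 0 < x := hX.trans_le hx
    obtain ⟨m, hxm, hmx, hm⟩ := H x hx
    have hm0 : (0 : ℝ) < m := hx0.trans_le hxm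
    have hclose : |(m : ℝ) / x - 1| < δ := by
      have h1 : 1 ≤ (m : ℝ) / x := (one_le_div hx0).2 hxm
      have h2 : (m : ℝ) / x ≤ 1 + τ := (div_le_iff₀ hx0).2 hmx
      rw [abs_lt]; constructor <;> linarith
    have hgx := hgpos x hx0
    have hgnx := hgpos (n * x) (by positivity)
    have h1 : (1 - σ) * g x ≤ g m := by
      have := (abs_lt.1 (hg m x hm0 hx0 hclose)).1
      rw [← le_div_iff₀ hgx]; linarith
    have h2 : g ((n : ℝ) * m) ≤ (1 + σ) * g (n * x) := by
      have hq : ((n : ℝ) * m) / (n * x) = m / x := by field_simp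
      have := (abs_lt.1 (hg (n * m) (n * x) (by positivity) (by positivity) (by rwa [hq]))).2
      rw [← div_le_iff₀ hgnx]; linarith
    have h3 : 0 ≤ f n * g x := mul_nonneg (hf0 n) hgx.le
    have hgm := hgpos m hm0
    have hgnm := hgpos (n * m) (by positivity)
    have hpos : 0 < (1 + σ) ^ 2 := by positivity
    refine le_of_mul_le_mul_left ?_ hpos
    have hfac : (1 + σ) ^ 2 * (1 - η) ≤ (1 - σ) ^ 3 := by
      rw [show η = 5 * σ by rw [hσ]; ring]
      nlinarith [pow_pos hσ0 2, pow_pos hσ0 3]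
    calc (1 + σ) ^ 2 * ((1 - η) * f n * g x) = (1 + σ) ^ 2 * (1 - η) * (f n * g x) := by ring
      _ ≤ (1 - σ) ^ 3 * (f n * g x) := mul_le_mul_of_nonneg_right hfac h3
      _ = (1 - σ) ^ 2 * (f n * ((1 - σ) * g x)) := by ring
      _ ≤ (1 - σ) ^ 2 * (f n * g m) :=
          mul_le_mul_of_nonneg_left (mul_le_mul_of_nonneg_left h1 (hf0 n)) (sq_nonneg _)
      _ ≤ (1 - τ) ^ 2 * (f n * g m) :=
          mul_le_mul_of_nonneg_right (pow_le_pow_left₀ (by linarith) (by linarith) 2)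
            (mul_nonneg (hf0 n) hgm.le)
      _ = (1 - τ) ^ 2 * f n * g m := by ring
      _ ≤ (1 + τ) * g ((n : ℝ) * m) := hm
      _ ≤ (1 + σ) * ((1 + σ) * g (n * x)) :=
          mul_le_mul (by linarith) h2 hgnm.le (by positivity)
      _ = (1 + σ) ^ 2 * g (n * x) := by ring

/-! ### Lower bounds for `g` on compact intervals -/

lemma LogUniformlyContinuous.continuousAt {g : ℝ → ℝ} (h : LogUniformlyContinuous g)
    (hgpos : ∀ x : ℝ, 0 < x → 0 < g x) {y : ℝ} (hy : 0 < y) : ContinuousAt g y := by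
  rw [Metric.continuousAt_iff]
  intro ε hε
  have hgy := hgpos y hy
  obtain ⟨δ, hδ, H⟩ := h (ε / g y) (by positivity)
  refine ⟨min y (δ * y), by positivity, fun x hx => ?_⟩
  rw [Real.dist_eq] at hx ⊢
  have hx0 : 0 < x := by linarith [(abs_lt.1 (hx.trans_le (min_le_left _ _))).1]
  have h1 : |x / y - 1| < δ := by
    rw [div_sub_one hy.ne', abs_div, abs_of_pos hy, div_lt_iff₀ hy]
    exact hx.trans_le (min_le_right _ _)
  have h2 := H x y hx0 hy h1
  rwa [div_sub_one hgy.ne', abs_div, abs_of_pos hgy, div_lt_div_iff_of_pos_right hgy] at h2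

lemma exists_pos_lower_bound {g : ℝ → ℝ} (hgpos : ∀ x : ℝ, 0 < x → 0 < g x)
    (hgreg : (∀ x y : ℝ, 0 < x → x ≤ y → g x ≤ g y) ∨ LogUniformlyContinuous g)
    {a b : ℝ} (ha : 0 < a) (hab : a ≤ b) : ∃ κ : ℝ, 0 < κ ∧ ∀ x ∈ Set.Icc a b, κ ≤ g x := by
  rcases hgreg with hmono | hluc
  · exact ⟨g a, hgpos a ha, fun x hx => hmono a x ha hx.1⟩
  · have hc : ContinuousOn g (Set.Icc a b) := fun x hx =>
      (hluc.continuousAt hgpos (ha.trans_le hx.1)).continuousWithinAt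
    obtain ⟨y, hy, hmin⟩ := isCompact_Icc.exists_isMinOn (Set.nonempty_Icc.2 hab) hc
    exact ⟨g y, hgpos y (ha.trans_le hy.1), fun x hx => hmin hx⟩

/-! ### Lower exponents -/

/-- `d` is a lower exponent of `g` if `g x` is at least a positive constant times `x ^ d` for all
large `x`. -/
def IsLowerExponent (g : ℝ → ℝ) (d : ℝ) : Prop :=
  ∃ κ : ℝ, 0 < κ ∧ ∃ X : ℝ, 0 < X ∧ ∀ x : ℝ, X ≤ x → κ * x ^ d ≤ g x

lemma IsLowerExponent.mono {g : ℝ → ℝ} {d e : ℝ} (h : IsLowerExponent g d) (hed : e ≤ d) :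
    IsLowerExponent g e := by
  obtain ⟨κ, hκ, X, hX, H⟩ := h
  refine ⟨κ, hκ, max X 1, by positivity, fun x hx => ?_⟩
  refine le_trans ?_ (H x ((le_max_left _ _).trans hx))
  exact mul_le_mul_of_nonneg_left
    (Real.rpow_le_rpow_of_exponent_le ((le_max_right _ _).trans hx) hed) hκ.le

/-- A dilation inequality `q * g x ≤ g (l * x)` with `q ≥ l ^ d` makes `d` a lower exponent: the
bound `κ * x ^ d ≤ g x` holds on `[X, l * X]` for a small `κ`, and dilating by `l` preserves it. -/
lemma isLowerExponent_of_dilation {g : ℝ → ℝ} (hgpos : ∀ x : ℝ, 0 < x → 0 < g x)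
    (hgreg : (∀ x y : ℝ, 0 < x → x ≤ y → g x ≤ g y) ∨ LogUniformlyContinuous g)
    {l q d X : ℝ} (hl : 1 < l) (hX : 0 < X) (hq : l ^ d ≤ q)
    (H : ∀ x : ℝ, X ≤ x → q * g x ≤ g (l * x)) : IsLowerExponent g d := by
  have hl0 : 0 < l := by linarith
  obtain ⟨κ, hκ, hκg⟩ := exists_pos_lower_bound hgpos hgreg (b := l * X) hX (by nlinarith)
  have hcont : ContinuousOn (fun x : ℝ => x ^ d) (Set.Icc X (l * X)) := fun x hx =>
    (Real.continuousAt_rpow_const x d (Or.inl (hX.trans_le hx.1).ne')).continuousWithinAt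
  obtain ⟨C, hC⟩ := isCompact_Icc.exists_bound_of_continuousOn hcont
  have hC1 : 0 < max C 1 := by positivity
  have hbase : ∀ x ∈ Set.Icc X (l * X), κ / max C 1 * x ^ d ≤ g x := by
    intro x hx
    have h1 : x ^ d ≤ max C 1 := ((le_abs_self _).trans (hC x hx)).trans (le_max_left _ _)
    calc κ / max C 1 * x ^ d ≤ κ / max C 1 * max C 1 := by gcongr
      _ = κ := by field_simp
      _ ≤ g x := hκg x hx
  have hstep : ∀ k : ℕ, ∀ x : ℝ, X ≤ x → x ≤ l ^ (k + 1) * X → κ / max C 1 * x ^ d ≤ g x := by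
    intro k
    induction k with
    | zero => intro x h1 h2; exact hbase x ⟨h1, by simpa using h2⟩
    | succ k ih =>
      intro x h1 h2
      rcases le_total x (l * X) with h | h
      · exact hbase x ⟨h1, h⟩
      · have hx0 : 0 < x := hX.trans_le h1
        have hy : X ≤ x / l := by rw [le_div_iff₀ hl0]; linarith
        have hy2 : x / l ≤ l ^ (k + 1) * X := by
          rw [div_le_iff₀ hl0]
          calc x ≤ l ^ (k + 1 + 1) * X := h2
            _ = l ^ (k + 1) * X * l := by ring
        have hxy : l * (x / l) = x := by field_simp
        have h3 := H (x / l) hy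
        rw [hxy] at h3
        calc κ / max C 1 * x ^ d = l ^ d * (κ / max C 1 * (x / l) ^ d) := by
              conv_lhs => rw [← hxy, Real.mul_rpow hl0.le (by positivity)]
              ring
          _ ≤ l ^ d * g (x / l) := by
              gcongr
              exact ih _ hy hy2
          _ ≤ q * g (x / l) := mul_le_mul_of_nonneg_right hq (hgpos _ (by positivity)).le
          _ ≤ g x := h3
  refine ⟨κ / max C 1, by positivity, X, hX, fun x hx => ?_⟩
  obtain ⟨k, hk⟩ := pow_unbounded_of_one_lt (x / X) hl
  rw [div_lt_iff₀ hX] at hk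
  refine hstep k x hx (hk.le.trans ?_)
  gcongr
  · exact hl.le
  · omega

lemma isLowerExponent_of_rpow_lt {f : ℕ → ℝ} {g : ℝ → ℝ} (hf0 : ∀ n, 0 ≤ f n)
    (hwsm : WeaklySuperMult f) (hgpos : ∀ x : ℝ, 0 < x → 0 < g x)
    (hgreg : (∀ x y : ℝ, 0 < x → x ≤ y → g x ≤ g y) ∨ LogUniformlyContinuous g)
    (hno : HasNormalOrder f g) {n : ℕ} (hn : 2 ≤ n) {d : ℝ} (hd : (n : ℝ) ^ d < f n) :
    IsLowerExponent g d := by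
  have hn2 : (2 : ℝ) ≤ n := by exact_mod_cast hn
  have hn0 : (0 : ℝ) < n := by linarith
  -- The strict inequality leaves room for the losses `(1 + η) ^ |d|` and `1 - η`.
  obtain ⟨η, hη, hη1, hηd⟩ : ∃ η : ℝ, 0 < η ∧ η < 1 ∧
      (1 + η) ^ |d| * (n : ℝ) ^ d ≤ (1 - η) * f n := by
    have hc : ContinuousAt (fun η : ℝ => (1 - η) * f n - (1 + η) ^ |d| * (n : ℝ) ^ d) 0 := by
      have : ContinuousAt (fun η : ℝ => (1 + η) ^ |d|) 0 :=
        ContinuousAt.rpow_const (by fun_prop) (Or.inl (by norm_num))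
      fun_prop
    have h0 : 0 < (1 - (0 : ℝ)) * f n - (1 + 0) ^ |d| * (n : ℝ) ^ d := by
      simpa using hd
    have h1 := hc.eventually (lt_mem_nhds h0)
    have h2 : ∀ᶠ η : ℝ in nhdsWithin 0 (Set.Ioi 0), η ∈ Set.Ioo (0 : ℝ) 1 :=
      Ioo_mem_nhdsGT (by norm_num)
    obtain ⟨η, h3, h4⟩ := ((h1.filter_mono nhdsWithin_le_nhds).and h2).exists
    exact ⟨η, h4.1, h4.2, by linarith⟩
  obtain ⟨l, hnl, hln, X, hX, H⟩ :=
    exists_dilation hf0 hwsm hgpos hgreg hno (n := n) (by omega) hη hη1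
  refine isLowerExponent_of_dilation hgpos hgreg (by linarith) hX ?_ H
  refine le_trans ?_ hηd
  have h1 : 1 ≤ l / n := (one_le_div hn0).2 hnl
  have h2 : l / n ≤ 1 + η := (div_le_iff₀ hn0).2 hln
  have hl : l = l / n * n := by field_simp
  calc l ^ d = (l / n) ^ d * (n : ℝ) ^ d := by
        conv_lhs => rw [hl, Real.mul_rpow (by linarith) hn0.le]
    _ ≤ (l / n) ^ |d| * (n : ℝ) ^ d := by
        gcongr
        exact le_abs_self d
    _ ≤ (1 + η) ^ |d| * (n : ℝ) ^ d := by gcongr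

/-- Below a lower exponent of its normal order, `f` dominates the power for almost all `n`. -/
lemma IsLowerExponent.hasNatDensity_zero {f : ℕ → ℝ} {g : ℝ → ℝ} {d e : ℝ}
    (h : IsLowerExponent g d) (hno : HasNormalOrder f g) (hed : e < d) :
    HasNatDensity {n : ℕ | f n ≤ (n : ℝ) ^ e} 0 := by
  obtain ⟨κ, hκ, X, hX, H⟩ := h
  have hE := hasNatDensity_zero_of_upperDensity (hno (1 / 2) (by norm_num))
  have hlim : Filter.Tendsto (fun n : ℕ => (n : ℝ) ^ (d - e)) Filter.atTop Filter.atTop :=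
    (tendsto_rpow_atTop (sub_pos.2 hed)).comp tendsto_natCast_atTop_atTop
  obtain ⟨N₀, hN₀⟩ := Filter.eventually_atTop.1
    ((hlim.eventually_gt_atTop (2 / κ)).and
      (tendsto_natCast_atTop_atTop.eventually_ge_atTop X))
  refine hE.zero_mono N₀ fun n hn hnN => ?_
  obtain ⟨h1, h2⟩ := hN₀ n hnN
  have hn0 : (0 : ℝ) < n := hX.trans_le h2
  have hpe : 0 < (n : ℝ) ^ e := Real.rpow_pos_of_pos hn0 e
  have h3 : 2 * (n : ℝ) ^ e ≤ g n := by
    refine le_trans ?_ (H n h2)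
    rw [show d = (d - e) + e by ring, Real.rpow_add hn0, ← mul_assoc]
    refine mul_le_mul_of_nonneg_right ?_ hpe.le
    rw [div_lt_iff₀ hκ] at h1
    linarith
  have h4 : f n ≤ (n : ℝ) ^ e := hn
  change 1 / 2 * g n ≤ |f n - g n|
  refine le_trans ?_ (neg_le_abs _)
  linarith

lemma exists_isLowerExponent {f : ℕ → ℝ} {g : ℝ → ℝ} (hf0 : ∀ n, 0 ≤ f n)
    (hwsm : WeaklySuperMult f) (hgpos : ∀ x : ℝ, 0 < x → 0 < g x)
    (hgreg : (∀ x y : ℝ, 0 < x → x ≤ y → g x ≤ g y) ∨ LogUniformlyContinuous g)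
    (hno : HasNormalOrder f g) : ∃ d, IsLowerExponent g d := by
  obtain ⟨n, hn, hfn⟩ : ∃ n : ℕ, 2 ≤ n ∧ 0 < f n := by
    by_contra! hcon
    refine not_hasNatDensity_zero (fun n hn => ?_)
      (hasNatDensity_zero_of_upperDensity (hno 1 one_pos))
    have h0 : f n = 0 := le_antisymm (hcon n hn) (hf0 n)
    simp [h0, le_abs_self]
  have hn1 : (1 : ℝ) < n := by exact_mod_cast hn
  refine ⟨Real.logb n (f n) - 1, isLowerExponent_of_rpow_lt hf0 hwsm hgpos hgreg hno hn ?_⟩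
  rw [← Real.lt_logb_iff_rpow_lt hn1 hfn]
  linarith

/-! ### The dichotomy -/

/-- Dichotomy: if `f : ℕ → [0,∞)` is weakly super-multiplicative with a strictly
positive normal order which is non-decreasing or log-uniformly continuous, then
exactly one of the following holds: (i) for every `M` the set `{n : f(n) ≤ n^M}` has
density `0`; (ii) there is a constant `c` with `f(n) ≤ n^c` for all `n ≥ 2` and such
that for every `ε > 0` the set `{n : f(n) < n^(c-ε)}` has density `0`. -/
theorem weakly_supermult_dichotomy
    (f : ℕ → ℝ) (g : ℝ → ℝ)
    (hf0 : ∀ n, 0 ≤ f n)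
    (hwsm : WeaklySuperMult f)
    (hgpos : ∀ x : ℝ, 0 < x → 0 < g x)
    (hgreg : (∀ x y : ℝ, 0 < x → x ≤ y → g x ≤ g y) ∨ LogUniformlyContinuous g)
    (hno : HasNormalOrder f g) :
    Xor'
      (∀ M : ℝ, HasNatDensity {n : ℕ | f n ≤ (n : ℝ) ^ M} 0)
      (∃ c : ℝ, (∀ n : ℕ, 2 ≤ n → f n ≤ (n : ℝ) ^ c) ∧
        ∀ ε : ℝ, 0 < ε → HasNatDensity {n : ℕ | f n < (n : ℝ) ^ (c - ε)} 0) := by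
  have hexcl : ∀ c : ℝ, (∀ n : ℕ, 2 ≤ n → f n ≤ (n : ℝ) ^ c) →
      ¬ ∀ M : ℝ, HasNatDensity {n : ℕ | f n ≤ (n : ℝ) ^ M} 0 := fun c hc h =>
    not_hasNatDensity_zero (S := {n : ℕ | f n ≤ (n : ℝ) ^ c}) hc (h c)
  by_cases hb : BddAbove {d | IsLowerExponent g d}
  · have hne : {d | IsLowerExponent g d}.Nonempty :=
      exists_isLowerExponent hf0 hwsm hgpos hgreg hno
    set c := sSup {d | IsLowerExponent g d} with hc
    have hle : ∀ n : ℕ, 2 ≤ n → f n ≤ (n : ℝ) ^ c := by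
      intro n hn
      by_contra! hlt
      have hn1 : (1 : ℝ) < n := by exact_mod_cast hn
      have hfn : 0 < f n := (Real.rpow_pos_of_pos (by linarith) c).trans hlt
      obtain ⟨d, hcd, hd⟩ := exists_between ((Real.lt_logb_iff_rpow_lt hn1 hfn).2 hlt)
      have hlow : IsLowerExponent g d := isLowerExponent_of_rpow_lt hf0 hwsm hgpos hgreg hno hn
        ((Real.lt_logb_iff_rpow_lt hn1 hfn).1 hd)
      exact hcd.not_ge (le_csSup hb hlow)
    refine Or.inr ⟨⟨c, hle, fun ε hε => ?_⟩, hexcl c hle⟩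
    obtain ⟨d, hd, hcd⟩ := exists_lt_of_lt_csSup hne (show c - ε < c by linarith)
    exact (IsLowerExponent.hasNatDensity_zero hd hno hcd).zero_mono 0 fun n hn _ => by
      have hlt : f n < (n : ℝ) ^ (c - ε) := hn
      exact hlt.le
  · have hall : ∀ M : ℝ, HasNatDensity {n : ℕ | f n ≤ (n : ℝ) ^ M} 0 := fun M => by
      obtain ⟨d, hd, hMd⟩ := not_bddAbove_iff.1 hb M
      exact IsLowerExponent.hasNatDensity_zero hd hno hMd
    exact Or.inl ⟨hall, fun ⟨c, hc, _⟩ => hexcl c hc hall⟩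
end
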